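/- arXiv:1101.4522 — 2 statements merged into one kernel-verified Lean document; each statement's English description precedes it below -/
import Mathlib

section
/- For every integer d ≥ 2, the liminf as n → ∞ of (1/n)·E_F(α_d^{⊗n}) is at least log₂(4/3), where α_d^{⊗n} is viewed as a bipartite state on ((ℂ^d)^{⊗n})_A ⊗ ((ℂ^d)^{⊗n})_B by grouping the n first tensor factors on one side and the n second tensor factors on the other. (This is the paper's lower bound E_C(α_d) ≥ log₂(4/3) on the entanglement cost of the antisymmetric state.) -/
open scoped BigOperators
open Classical
open scoped ComplexOrder

noncomputable section

/-- Partial trace over the second tensor factor: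
`(ptraceSnd M) a a' = ∑ b, M (a,b) (a',b)`. -/
def ptraceSnd {α β : Type*} [Fintype β] (M : Matrix (α × β) (α × β) ℂ) : Matrix α α ℂ :=
  Matrix.of fun a a' => ∑ b : β, M (a, b) (a', b)

/-- Von Neumann entropy (in bits) of a matrix, via the eigenvalues of a Hermitian matrix
(with the convention `0 * log₂ 0 = 0`, automatic since `Real.logb 2 0 = 0`). -/
def vnEntropy {ι : Type*} [Fintype ι] [DecidableEq ι] (ρ : Matrix ι ι ℂ) : ℝ :=
  if h : ρ.IsHermitian then -∑ i, h.eigenvalues i * Real.logb 2 (h.eigenvalues i) else 0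

/-- Entanglement of formation of a bipartite (density) matrix: the infimum of the average
entropy of entanglement over all finite pure-state ensembles for `ρ`. -/
def EoF {α β : Type*} [Fintype α] [DecidableEq α] [Fintype β] [DecidableEq β]
    (ρ : Matrix (α × β) (α × β) ℂ) : ℝ :=
  sInf {E : ℝ | ∃ (k : ℕ) (p : Fin k → ℝ) (ψ : Fin k → (α × β → ℂ)),
    (∀ i, 0 ≤ p i) ∧ (∑ i, p i = 1) ∧
    (∀ i, ∑ x, Complex.normSq (ψ i x) = 1) ∧
    (∑ i, p i • Matrix.vecMulVec (ψ i) (star (ψ i)) = ρ) ∧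
    E = ∑ i, p i * vnEntropy (ptraceSnd (Matrix.vecMulVec (ψ i) (star (ψ i))))}

/-- The antisymmetric projector `P₂^{(d)} = (1/2)(𝟙 - F)` on `ℂ^d ⊗ ℂ^d`. -/
def asymProj (d : ℕ) : Matrix (Fin d × Fin d) (Fin d × Fin d) ℂ :=
  Matrix.of fun p q => (1 / 2 : ℂ) *
    ((if p.1 = q.1 ∧ p.2 = q.2 then 1 else 0) - (if p.1 = q.2 ∧ p.2 = q.1 then 1 else 0))

/-- The antisymmetric state `α_d = P₂^{(d)} / binom(d,2)`. -/
def antisymState (d : ℕ) : Matrix (Fin d × Fin d) (Fin d × Fin d) ℂ :=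
  (1 / (Nat.choose d 2 : ℂ)) • asymProj d

/-- `α_d^{⊗n}`, viewed as a bipartite state on `((ℂ^d)^{⊗n})_A ⊗ ((ℂ^d)^{⊗n})_B`
(the `n` first tensor factors grouped on the `A` side, the `n` second ones on the `B` side). -/
def alphaPow (d n : ℕ) :
    Matrix ((Fin n → Fin d) × (Fin n → Fin d)) ((Fin n → Fin d) × (Fin n → Fin d)) ℂ :=
  Matrix.of fun p q => ∏ i : Fin n, antisymState d (p.1 i, p.2 i) (q.1 i, q.2 i)

/-- `(P₂^{(d)})^{⊗n}`, viewed as an operator on `((ℂ^d)^{⊗n})_A ⊗ ((ℂ^d)^{⊗n})_B`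
(the `n` first tensor factors grouped on the `A` side, the `n` second ones on the `B` side). -/
def asymPow (d n : ℕ) :
    Matrix ((Fin n → Fin d) × (Fin n → Fin d)) ((Fin n → Fin d) × (Fin n → Fin d)) ℂ :=
  Matrix.of fun p q => ∏ i : Fin n, asymProj d (p.1 i, p.2 i) (q.1 i, q.2 i)

/-- The antisymmetrizer `P_k^{(d)} = (1/k!) ∑_{σ ∈ S_k} sgn(σ) U_σ` on `(ℂ^d)^{⊗k}`. -/
def asymProjK (d k : ℕ) : Matrix (Fin k → Fin d) (Fin k → Fin d) ℂ :=
  Matrix.of fun f g => (1 / (Nat.factorial k) : ℂ) *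
    ∑ σ : Equiv.Perm (Fin k), ((Equiv.Perm.sign σ : ℤ) : ℂ) * (if f = g ∘ σ then 1 else 0)

/-- Quantum conditional mutual information `I(A;B|E) = H(AE) + H(BE) - H(ABE) - H(E)`
(in bits) of a tripartite (density) matrix. -/
def condMutInfo {α β γ : Type*} [Fintype α] [DecidableEq α] [Fintype β] [DecidableEq β]
    [Fintype γ] [DecidableEq γ] (ρ : Matrix ((α × β) × γ) ((α × β) × γ) ℂ) : ℝ :=
  vnEntropy (Matrix.of fun p q : α × γ => ∑ b : β, ρ ((p.1, b), p.2) ((q.1, b), q.2))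
  + vnEntropy (Matrix.of fun p q : β × γ => ∑ a : α, ρ ((a, p.1), p.2) ((a, q.1), q.2))
  - vnEntropy ρ
  - vnEntropy (Matrix.of fun e e' : γ => ∑ a : α, ∑ b : β, ρ ((a, b), e) ((a, b), e'))

/-- Squashed entanglement: `E_sq(ρ_AB) = inf (1/2) I(A;B|E)` over all finite-dimensional
extensions `ρ_ABE` of `ρ_AB`. -/
def Esq {α β : Type*} [Fintype α] [DecidableEq α] [Fintype β] [DecidableEq β]
    (ρ : Matrix (α × β) (α × β) ℂ) : ℝ :=
  sInf {x : ℝ | ∃ (m : ℕ) (σ : Matrix ((α × β) × Fin m) ((α × β) × Fin m) ℂ),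
    σ.PosSemidef ∧ σ.trace = 1 ∧ ptraceSnd σ = ρ ∧ x = (1 / 2) * condMutInfo σ}

/-- The operator norm `‖·‖_∞` of a matrix, acting on Euclidean space. -/
def opNorm {ι : Type*} [Fintype ι] [DecidableEq ι] (M : Matrix ι ι ℂ) : ℝ :=
  ‖Matrix.toEuclideanCLM (𝕜 := ℂ) M‖

/-- A bipartite (density) matrix is separable if it is a finite convex combination of
product density matrices. -/
def IsSeparableMat {α β : Type*} [Fintype α] [Fintype β]
    (σ : Matrix (α × β) (α × β) ℂ) : Prop :=
  ∃ (k : ℕ) (p : Fin k → ℝ) (ρA : Fin k → Matrix α α ℂ) (ρB : Fin k → Matrix β β ℂ),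
    (∀ i, 0 ≤ p i) ∧ (∑ i, p i = 1) ∧
    (∀ i, (ρA i).PosSemidef) ∧ (∀ i, (ρA i).trace = 1) ∧
    (∀ i, (ρB i).PosSemidef) ∧ (∀ i, (ρB i).trace = 1) ∧
    σ = ∑ i, p i • Matrix.kroneckerMap (· * ·) (ρA i) (ρB i)

/-!
Every vector of an ensemble for `α_d^{⊗n}` lies in the range of `P^{⊗n}`, where `P` projects onto
`Λ² = Λ²(ℂ^d)`. Since the von Neumann entropy is at least the collision entropy, it suffices that
the reduced state of such a unit vector `ψ` has purity at most `(3/4)^n`.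

The purity is the expectation of `F^{⊗n}` in `ψ ⊗ ψ`, where `F` swaps the two `A` systems at one
site. Replacing `F` by `F + 1/4` adds, with positive coefficients, the expectations of swaps at
proper subsets of the sites. Each of these is itself the purity of a reduced state of `ψ`, hence
nonnegative, so the replacement only increases the value. As `ψ ⊗ ψ` is fixed by `(P ⊗ P)^{⊗n}`,
the new expectation is at most the `n`-th power of the norm of the compression of `F + 1/4` to
`Λ² ⊗ Λ²`.

Write `s`, `t` for the exchanges of the two systems in each copy and `q` for the product of their
antisymmetric projections `(1 - s)/2` and `(1 - t)/2`. The braid relations `f s f = s f s` and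
`f t f = t f t` for `f = F` give `q (f s f) q = q (f t f) q = q f q`, and with
`x = q (f + 1/4) q` the linear terms in `q f q` cancel: `x² = (5/16) q + (1/4) q u q` with
`u = f s t f` unitary, so `‖x‖² ≤ 9/16`. The constant `1/4` centres the spectrum of `q f q`, which
lies in `[-1, 1/2]`.
-/

open scoped Matrix Kronecker Matrix.Norms.L2Operator

section Density

variable {ι : Type*} [Fintype ι] {ρ : Matrix ι ι ℂ}

/-- A density matrix: the matrix of a density operator in the standard basis. -/
structure IsDensityMatrix (ρ : Matrix ι ι ℂ) : Prop where
  posSemidef : ρ.PosSemidef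
  trace_eq_one : ρ.trace = 1

variable [DecidableEq ι]

theorem vnEntropy_eq_sum_negMulLog (h : ρ.IsHermitian) :
    vnEntropy ρ = (∑ i, Real.negMulLog (h.eigenvalues i)) / Real.log 2 := by
  rw [vnEntropy, dif_pos h, Finset.sum_div, ← Finset.sum_neg_distrib]
  exact Finset.sum_congr rfl fun i _ ↦ by rw [Real.negMulLog, Real.logb]; ring

theorem re_trace_mul_self_eq_sum_eigenvalues_sq (h : ρ.IsHermitian) :
    (ρ * ρ).trace.re = ∑ i, h.eigenvalues i ^ 2 := by
  conv_lhs => rw [h.spectral_theorem, ← map_mul, Unitary.conjStarAlgAut_apply,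
    Matrix.trace_mul_comm, ← mul_assoc]
  simp [Matrix.trace, sq]

namespace IsDensityMatrix

theorem sum_eigenvalues (h : IsDensityMatrix ρ) : ∑ i, h.posSemidef.1.eigenvalues i = 1 := by
  simpa [h.trace_eq_one] using (congrArg Complex.re h.posSemidef.1.trace_eq_sum_eigenvalues).symm

theorem vnEntropy_nonneg (h : IsDensityMatrix ρ) : 0 ≤ vnEntropy ρ := by
  rw [vnEntropy_eq_sum_negMulLog h.posSemidef.1]
  have hnonneg := h.posSemidef.eigenvalues_nonneg
  refine div_nonneg (Finset.sum_nonneg fun i hi ↦ Real.negMulLog_nonneg (hnonneg i) ?_)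
    (Real.log_nonneg one_le_two)
  exact h.sum_eigenvalues ▸ Finset.single_le_sum (fun j _ ↦ hnonneg j) hi

theorem vnEntropy_le_logb_card (h : IsDensityMatrix ρ) :
    vnEntropy ρ ≤ Real.logb 2 (Fintype.card ι) := by
  rw [vnEntropy_eq_sum_negMulLog h.posSemidef.1, Real.logb]
  gcongr
  set N : ℝ := (Fintype.card ι : ℝ)
  have hN : 0 < N := by
    have : Nonempty ι := by
      by_contra! hι
      simpa using h.sum_eigenvalues
    exact Nat.cast_pos.2 Fintype.card_pos
  have jensen := Real.concaveOn_negMulLog.le_map_sum (t := Finset.univ) (w := fun _ : ι ↦ N⁻¹)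
    (fun _ _ ↦ by positivity) (by simp [N, hN.ne'])
    (fun i _ ↦ h.posSemidef.eigenvalues_nonneg i)
  simp only [smul_eq_mul, ← Finset.mul_sum, h.sum_eigenvalues] at jensen
  rw [mul_one, Real.negMulLog, Real.log_inv, neg_mul_neg] at jensen
  exact le_of_mul_le_mul_left jensen (inv_pos.2 hN)

theorem neg_logb_le_vnEntropy (h : IsDensityMatrix ρ) {c : ℝ} (hc : (ρ * ρ).trace.re ≤ c) :
    -Real.logb 2 c ≤ vnEntropy ρ := by
  rw [vnEntropy_eq_sum_negMulLog h.posSemidef.1, Real.logb, ← neg_div]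
  gcongr
  set μ := h.posSemidef.1.eigenvalues
  have hnonneg : ∀ i, 0 ≤ μ i := h.posSemidef.eigenvalues_nonneg
  have hpos : ∀ i, 0 < μ i ^ μ i := fun i ↦ by
    rcases (hnonneg i).eq_or_lt with h0 | h0
    · simp [← h0]
    · positivity
  have amgm : ∏ i, μ i ^ μ i ≤ c := calc
    ∏ i, μ i ^ μ i ≤ ∑ i, μ i * μ i := Real.geom_mean_le_arith_mean_weighted _ _ _
      (fun i _ ↦ hnonneg i) h.sum_eigenvalues fun i _ ↦ hnonneg i
    _ = (ρ * ρ).trace.re := by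
      rw [re_trace_mul_self_eq_sum_eigenvalues_sq h.posSemidef.1]
      exact Finset.sum_congr rfl fun i _ ↦ (sq _).symm
    _ ≤ c := hc
  calc -Real.log c ≤ -Real.log (∏ i, μ i ^ μ i) :=
        neg_le_neg (Real.log_le_log (Finset.prod_pos fun i _ ↦ hpos i) amgm)
    _ = ∑ i, Real.negMulLog (μ i) := by
      rw [Real.log_prod fun i _ ↦ (hpos i).ne', ← Finset.sum_neg_distrib]
      refine Finset.sum_congr rfl fun i _ ↦ ?_
      rcases (hnonneg i).eq_or_lt with h0 | h0
      · simp [← h0]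
      · rw [Real.log_rpow h0, Real.negMulLog, neg_mul]

end IsDensityMatrix

end Density

section EntanglementOfFormation

variable {ι : Type*} [Fintype ι] {k : ℕ} {p : Fin k → ℝ} {ρ : Matrix ι ι ℂ}

/-- The ensemble of unit vectors `ψ i` with weights `p i` is a pure-state decomposition of `ρ`. -/
structure IsPureEnsemble (p : Fin k → ℝ) (ψ : Fin k → ι → ℂ) (ρ : Matrix ι ι ℂ) : Prop where
  nonneg : ∀ i, 0 ≤ p i
  sum_eq_one : ∑ i, p i = 1
  normSq_eq_one : ∀ i, ∑ x, Complex.normSq (ψ i x) = 1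
  sum_eq : ∑ i, p i • Matrix.vecMulVec (ψ i) (star (ψ i)) = ρ

theorem IsDensityMatrix.exists_isPureEnsemble (h : IsDensityMatrix ρ) :
    ∃ (k : ℕ) (p : Fin k → ℝ) (ψ : Fin k → ι → ℂ), IsPureEnsemble p ψ ρ := by
  classical
  have hρ := h.posSemidef.1
  let e := (Fintype.equivFin ι).symm
  refine ⟨Fintype.card ι, fun i ↦ hρ.eigenvalues (e i), fun i ↦ hρ.eigenvectorBasis (e i),
    fun i ↦ h.posSemidef.eigenvalues_nonneg _, ?_, fun i ↦ ?_, ?_⟩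
  · exact (e.sum_comp hρ.eigenvalues).trans h.sum_eigenvalues
  · simp_rw [Complex.normSq_eq_norm_sq, ← EuclideanSpace.norm_sq_eq,
      hρ.eigenvectorBasis.norm_eq_one, one_pow]
  · rw [e.sum_comp fun i ↦ hρ.eigenvalues i • Matrix.vecMulVec (hρ.eigenvectorBasis i).ofLp
      (star (hρ.eigenvectorBasis i).ofLp)]
    conv_rhs => rw [hρ.spectral_theorem, Unitary.conjStarAlgAut_apply]
    ext x y
    rw [Matrix.sum_apply, Matrix.mul_apply]
    simp only [Matrix.smul_apply, Matrix.vecMulVec_apply, Matrix.mul_diagonal,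
      Matrix.star_apply, Function.comp_apply, Pi.star_apply, Complex.real_smul,
      Matrix.IsHermitian.eigenvectorUnitary_apply, RCLike.ofReal_eq_complex_ofReal]
    exact Finset.sum_congr rfl fun i _ ↦ by ring

theorem IsPureEnsemble.mulVec_eq_self {ψ : Fin k → ι → ℂ} (h : IsPureEnsemble p ψ ρ)
    {K : Matrix ι ι ℂ} (hK : K * ρ = ρ) {i : Fin k} (hi : p i ≠ 0) : K *ᵥ ψ i = ψ i := by
  classical
  let r : Fin k → ι → ℂ := fun i ↦ (1 - K) *ᵥ ψ i
  have hsum : ∑ i, p i • Matrix.vecMulVec (r i) (star (r i)) = 0 := by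
    calc ∑ i, p i • Matrix.vecMulVec (r i) (star (r i))
        = (1 - K) * (∑ i, p i • Matrix.vecMulVec (ψ i) (star (ψ i))) * (1 - K).conjTranspose := by
          simp only [r, Matrix.star_mulVec, Finset.mul_sum, Finset.sum_mul,
            mul_smul_comm, smul_mul_assoc, Matrix.mul_vecMulVec, Matrix.vecMulVec_mul]
      _ = 0 := by rw [h.sum_eq, sub_mul, one_mul, hK, sub_self, zero_mul]
  have htrace : ∑ i, p i • (r i ⬝ᵥ star (r i)) = 0 := by
    simpa [Matrix.trace_sum, Matrix.trace_smul, Matrix.trace_vecMulVec] using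
      congrArg Matrix.trace hsum
  have hterm := (Finset.sum_eq_zero_iff_of_nonneg fun j _ ↦
    smul_nonneg (h.nonneg j) (dotProduct_self_star_nonneg (r j))).1 htrace i (Finset.mem_univ i)
  have hr : r i = 0 := dotProduct_self_star_eq_zero.1 ((smul_eq_zero.1 hterm).resolve_left hi)
  rw [show r i = (1 - K) *ᵥ ψ i from rfl, Matrix.sub_mulVec, Matrix.one_mulVec,
    sub_eq_zero] at hr
  exact hr.symm

variable {α β : Type*} [Fintype β]

/-- The reduced state on the first tensor factor of the pure state `ψ`. -/
def reducedState (ψ : α × β → ℂ) : Matrix α α ℂ :=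
  ptraceSnd (Matrix.vecMulVec ψ (star ψ))

theorem reducedState_eq_mul_conjTranspose (ψ : α × β → ℂ) :
    reducedState ψ = Matrix.of ψ.curry * (Matrix.of ψ.curry).conjTranspose := by
  ext a a'
  simp [reducedState, ptraceSnd, Matrix.mul_apply, Matrix.vecMulVec_apply]

variable [Fintype α]

theorem isDensityMatrix_reducedState {ψ : α × β → ℂ} (hψ : ∑ x, Complex.normSq (ψ x) = 1) :
    IsDensityMatrix (reducedState ψ) where
  posSemidef := by
    rw [reducedState_eq_mul_conjTranspose]
    exact Matrix.posSemidef_self_mul_conjTranspose _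
  trace_eq_one := by
    simp only [reducedState, ptraceSnd, Matrix.trace, Matrix.diag, Matrix.of_apply,
      Matrix.vecMulVec_apply, Pi.star_apply, Complex.star_def, Complex.mul_conj]
    rw [← Fintype.sum_prod_type (fun x ↦ (Complex.normSq (ψ x) : ℂ))]
    exact_mod_cast hψ

variable [DecidableEq α] [DecidableEq β] {ρ : Matrix (α × β) (α × β) ℂ}

theorem EoF_le_logb_card (h : IsDensityMatrix ρ) :
    EoF ρ ≤ Real.logb 2 (Fintype.card α) := by
  obtain ⟨k, p, ψ, hψ⟩ := h.exists_isPureEnsemble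
  calc EoF ρ ≤ ∑ i, p i * vnEntropy (reducedState (ψ i)) := by
        refine csInf_le ⟨0, ?_⟩
          ⟨k, p, ψ, hψ.nonneg, hψ.sum_eq_one, hψ.normSq_eq_one, hψ.sum_eq, rfl⟩
        rintro _ ⟨k, p, ψ, hp, -, hψ, -, rfl⟩
        exact Finset.sum_nonneg fun i _ ↦
          mul_nonneg (hp i) (isDensityMatrix_reducedState (hψ i)).vnEntropy_nonneg
    _ ≤ ∑ i, p i * Real.logb 2 (Fintype.card α) := Finset.sum_le_sum fun i _ ↦
        mul_le_mul_of_nonneg_left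
          (isDensityMatrix_reducedState (hψ.normSq_eq_one i)).vnEntropy_le_logb_card (hψ.nonneg i)
    _ = Real.logb 2 (Fintype.card α) := by rw [← Finset.sum_mul, hψ.sum_eq_one, one_mul]

theorem le_EoF (h : IsDensityMatrix ρ) {K : Matrix (α × β) (α × β) ℂ} (hK : K * ρ = ρ) {c : ℝ}
    (hc : ∀ ψ : α × β → ℂ, ∑ x, Complex.normSq (ψ x) = 1 → K *ᵥ ψ = ψ →
      c ≤ vnEntropy (reducedState ψ)) :
    c ≤ EoF ρ := by
  obtain ⟨k, p, ψ, hψ⟩ := h.exists_isPureEnsemble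
  refine le_csInf ⟨_, k, p, ψ, hψ.nonneg, hψ.sum_eq_one, hψ.normSq_eq_one, hψ.sum_eq, rfl⟩ ?_
  rintro _ ⟨k, p, ψ, hp, hp_sum, hψ, hρ, rfl⟩
  calc c = ∑ i, p i * c := by rw [← Finset.sum_mul, hp_sum, one_mul]
    _ ≤ ∑ i, p i * vnEntropy (reducedState (ψ i)) := by
      refine Finset.sum_le_sum fun i _ ↦ ?_
      rcases eq_or_ne (p i) 0 with h0 | h0
      · simp [h0]
      · exact mul_le_mul_of_nonneg_left
          (hc _ (hψ i) (IsPureEnsemble.mulVec_eq_self ⟨hp, hp_sum, hψ, hρ⟩ hK h0)) (hp i)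

end EntanglementOfFormation

section SwapTest

/-- The vector `ψ ⊗ ψ`. -/
def tensorSquare {ι : Type*} (ψ : ι → ℂ) : ι × ι → ℂ :=
  fun p ↦ ψ p.1 * ψ p.2

/-- On two copies of a bipartite index type, the exchange of the two first components; its
permutation matrix is the operator `F_{AA'}` of the swap test. -/
def swapFst (α β : Type*) : Equiv.Perm ((α × β) × (α × β)) where
  toFun p := ((p.2.1, p.1.2), (p.1.1, p.2.2))
  invFun p := ((p.2.1, p.1.2), (p.1.1, p.2.2))

variable {α β : Type*} [Fintype α] [Fintype β]

theorem trace_reducedState_mul_self (ψ : α × β → ℂ) :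
    (reducedState ψ * reducedState ψ).trace =
      star (tensorSquare ψ) ⬝ᵥ (tensorSquare ψ ∘ swapFst α β) := by
  simp only [Matrix.trace, Matrix.diag, Matrix.mul_apply, reducedState, ptraceSnd,
    Matrix.of_apply, Matrix.vecMulVec_apply, Pi.star_apply, dotProduct, tensorSquare,
    Function.comp_apply, swapFst, Equiv.coe_fn_mk, Fintype.sum_prod_type, star_mul',
    Finset.sum_mul_sum]
  rw [Finset.sum_comm]
  refine Finset.sum_congr rfl fun a _ ↦ ?_
  rw [Finset.sum_comm (s := Finset.univ (α := β)) (t := Finset.univ (α := α))]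
  refine Finset.sum_congr rfl fun a' _ ↦ Finset.sum_congr rfl fun b _ ↦
    Finset.sum_congr rfl fun b' _ ↦ ?_
  ring

theorem star_dotProduct_comp_perm_eq_trace {γ : Type*} [Fintype γ] {v : γ → ℂ}
    {ψ : α × β → ℂ} {π : Equiv.Perm γ} (φ : (α × β) × (α × β) ≃ γ)
    (hv : v ∘ φ = tensorSquare ψ) (hπ : φ ∘ swapFst α β = π ∘ φ) :
    star v ⬝ᵥ (v ∘ π) = (reducedState ψ * reducedState ψ).trace := by
  rw [trace_reducedState_mul_self, ← hv, Function.comp_assoc, hπ]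
  exact (φ.sum_comp fun z ↦ star v z * (v ∘ π) z).symm

theorem trace_reducedState_mul_self_nonneg (ψ : α × β → ℂ) :
    0 ≤ (reducedState ψ * reducedState ψ).trace := by
  have hermitian : (reducedState ψ).IsHermitian := by
    rw [reducedState_eq_mul_conjTranspose]
    exact Matrix.isHermitian_mul_conjTranspose_self _
  simpa only [hermitian.eq] using
    (Matrix.posSemidef_conjTranspose_mul_self (reducedState ψ)).trace_nonneg

end SwapTest

section Symmetry

/-- A symmetry: a self-adjoint unitary, that is, a reflection. -/
structure IsSymmetry {R : Type*} [Monoid R] [Star R] (s : R) : Prop where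
  isSelfAdjoint : IsSelfAdjoint s
  mul_self : s * s = 1

/-- The projection onto the eigenspace of a symmetry `s` for the eigenvalue `-1`. -/
def negEigenproj {R : Type*} [Ring R] [Module ℂ R] (s : R) : R :=
  (1 / 2 : ℂ) • (1 - s)

theorem commute_negEigenproj {R : Type*} [Ring R] [Algebra ℂ R] {s t : R} (h : Commute s t) :
    Commute (negEigenproj s) (negEigenproj t) :=
  (((Commute.one_left _).sub_left ((Commute.one_right _).sub_right h)).smul_left _).smul_right _

theorem mul_conj_mul_eq {R : Type*} [Ring R] {q s f : R} (hsf : f * s * f = s * f * s)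
    (hqs : q * s = -q) (hsq : s * q = -q) : q * (f * s * f) * q = q * f * q := by
  calc q * (f * s * f) * q = (q * s) * f * (s * q) := by rw [hsf]; simp only [mul_assoc]
    _ = q * f * q := by rw [hqs, hsq]; noncomm_ring

namespace IsSymmetry

section StarRing

variable {R : Type*} [Ring R] [StarRing R] {s t : R}

theorem mem_unitary (hs : IsSymmetry s) : s ∈ unitary R :=
  ⟨by rw [hs.isSelfAdjoint.star_eq, hs.mul_self], by rw [hs.isSelfAdjoint.star_eq, hs.mul_self]⟩

variable [Algebra ℂ R]

theorem negEigenproj_mul_self (hs : IsSymmetry s) : negEigenproj s * s = -negEigenproj s := by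
  rw [negEigenproj, smul_mul_assoc, sub_mul, hs.mul_self, one_mul, ← smul_neg, neg_sub]

theorem self_mul_negEigenproj (hs : IsSymmetry s) : s * negEigenproj s = -negEigenproj s := by
  rw [negEigenproj, mul_smul_comm, mul_sub, hs.mul_self, mul_one, ← smul_neg, neg_sub]

variable [StarModule ℂ R]

theorem isStarProjection_negEigenproj (hs : IsSymmetry s) :
    IsStarProjection (negEigenproj s) where
  isIdempotentElem := by
    rw [IsIdempotentElem]
    nth_rw 1 [negEigenproj]
    rw [smul_mul_assoc, sub_mul, one_mul, hs.self_mul_negEigenproj]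
    module
  isSelfAdjoint := by
    simp [IsSelfAdjoint, negEigenproj, hs.isSelfAdjoint.star_eq]

theorem isStarProjection_negEigenproj_mul (hs : IsSymmetry s) (ht : IsSymmetry t)
    (hst : Commute s t) : IsStarProjection (negEigenproj s * negEigenproj t) :=
  hs.isStarProjection_negEigenproj.mul ht.isStarProjection_negEigenproj
    (commute_negEigenproj hst)

theorem compression_mul_compression {f : R} (hs : IsSymmetry s) (ht : IsSymmetry t)
    (hf : IsSymmetry f) (hst : Commute s t) (hsf : f * s * f = s * f * s)
    (htf : f * t * f = t * f * t) :
    let q := negEigenproj s * negEigenproj t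
    q * f * q * f * q = (1 / 4 : ℂ) • (q - 2 • (q * f * q) + q * (f * s * t * f) * q) := by
  intro q
  have hqq : q * q = q := (hs.isStarProjection_negEigenproj_mul ht hst).isIdempotentElem
  have hq : q = (1 / 4 : ℂ) • (1 - s - t + s * t) := by
    simp only [q, negEigenproj, smul_mul_smul_comm, sub_mul, mul_sub, one_mul, mul_one]
    module
  have hcomm : q = negEigenproj t * negEigenproj s := (commute_negEigenproj hst).eq
  have hsq : s * q = -q := by rw [← mul_assoc, hs.self_mul_negEigenproj, neg_mul]
  have hqt : q * t = -q := by rw [mul_assoc, ht.negEigenproj_mul_self, mul_neg]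
  have hqs : q * s = -q := by rw [hcomm, mul_assoc, hs.negEigenproj_mul_self, mul_neg]
  have htq : t * q = -q := by rw [hcomm, ← mul_assoc, ht.self_mul_negEigenproj, neg_mul]
  calc q * f * q * f * q
      = (1 / 4 : ℂ) • (q * (f * f) * q - q * (f * s * f) * q - q * (f * t * f) * q +
          q * (f * s * t * f) * q) := by
        conv_lhs => enter [1, 1, 2]; rw [hq]
        simp only [mul_smul_comm, smul_mul_assoc, mul_add, mul_sub, add_mul, sub_mul, mul_one,
          mul_assoc]
    _ = (1 / 4 : ℂ) • (q - 2 • (q * f * q) + q * (f * s * t * f) * q) := by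
      rw [hf.mul_self, mul_one, hqq, mul_conj_mul_eq hsf hqs hsq, mul_conj_mul_eq htf hqt htq]
      module

theorem compression_add_quarter_mul_self {f : R} (hs : IsSymmetry s) (ht : IsSymmetry t)
    (hf : IsSymmetry f) (hst : Commute s t) (hsf : f * s * f = s * f * s)
    (htf : f * t * f = t * f * t) :
    let q := negEigenproj s * negEigenproj t
    (q * (f + (1 / 4 : ℂ) • 1) * q) * (q * (f + (1 / 4 : ℂ) • 1) * q) =
      (5 / 16 : ℂ) • q + (1 / 4 : ℂ) • (q * (f * s * t * f) * q) := by
  intro q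
  have hqq : q * q = q := (hs.isStarProjection_negEigenproj_mul ht hst).isIdempotentElem
  have hx : q * (f + (1 / 4 : ℂ) • 1) * q = q * f * q + (1 / 4 : ℂ) • q := by
    rw [mul_add, add_mul, mul_smul_comm, mul_one, smul_mul_assoc, hqq]
  calc (q * (f + (1 / 4 : ℂ) • 1) * q) * (q * (f + (1 / 4 : ℂ) • 1) * q)
      = q * f * (q * q) * f * q + (1 / 4 : ℂ) • (q * f * (q * q)) +
          (1 / 4 : ℂ) • ((q * q) * f * q) + (1 / 16 : ℂ) • (q * q) := by
        rw [hx, add_mul, mul_add, mul_add]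
        simp only [mul_smul_comm, smul_mul_assoc, mul_assoc]
        module
    _ = (5 / 16 : ℂ) • q + (1 / 4 : ℂ) • (q * (f * s * t * f) * q) := by
      rw [hqq, compression_mul_compression hs ht hf hst hsf htf]
      module

end StarRing

theorem norm_compression_add_quarter_le {A : Type*} [CStarAlgebra A] {s t f : A} (hs : IsSymmetry s)
    (ht : IsSymmetry t) (hf : IsSymmetry f) (hst : Commute s t) (hsf : f * s * f = s * f * s)
    (htf : f * t * f = t * f * t) :
    ‖negEigenproj s * negEigenproj t * (f + (1 / 4 : ℂ) • 1) *
      (negEigenproj s * negEigenproj t)‖ ≤ 3 / 4 := by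
  have hq := hs.isStarProjection_negEigenproj_mul ht hst
  have hsq := compression_add_quarter_mul_self hs ht hf hst hsf htf
  set q := negEigenproj s * negEigenproj t
  have hq_norm : ‖q‖ ≤ 1 := hq.norm_le
  set u := f * s * t * f
  have hu : u ∈ unitary A :=
    mul_mem (mul_mem (mul_mem hf.mem_unitary hs.mem_unitary) ht.mem_unitary) hf.mem_unitary
  have hquq : ‖q * u * q‖ ≤ 1 := calc
    ‖q * u * q‖ ≤ ‖q * u‖ * ‖q‖ := norm_mul_le _ _
    _ = ‖q‖ * ‖q‖ := by rw [CStarRing.norm_mul_mem_unitary _ hu]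
    _ ≤ 1 := mul_le_one₀ hq_norm (norm_nonneg _) hq_norm
  set x := q * (f + (1 / 4 : ℂ) • 1) * q
  have hx : IsSelfAdjoint x := by
    simp [x, IsSelfAdjoint, hq.isSelfAdjoint.star_eq, hf.isSelfAdjoint.star_eq, mul_assoc]
  refine (sq_le_sq₀ (norm_nonneg _) (by norm_num)).1 ?_
  calc ‖x‖ ^ 2 = ‖(5 / 16 : ℂ) • q + (1 / 4 : ℂ) • (q * u * q)‖ := by
        rw [← hsq, hx.norm_mul_self]
    _ ≤ 5 / 16 * ‖q‖ + 1 / 4 * ‖q * u * q‖ := by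
      refine (norm_add_le _ _).trans_eq ?_
      simp [norm_smul]
    _ ≤ (3 / 4) ^ 2 := by linarith

end IsSymmetry

end Symmetry

section TensorPower

variable {ι m : Type*} [Fintype ι]

/-- The tensor product `⨂ i, M i` of a finite family of matrices, indexed by tuples. -/
def piKronecker : MultilinearMap ℂ (fun _ : ι ↦ Matrix m m ℂ) (Matrix (ι → m) (ι → m) ℂ) :=
  (Matrix.ofLinearEquiv ℂ).toLinearMap.compMultilinearMap <|
    MultilinearMap.pi fun x ↦ MultilinearMap.pi fun y ↦
      (MultilinearMap.mkPiAlgebra ℂ ι ℂ).compLinearMap fun i ↦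
        Matrix.entryLinearMap ℂ ℂ (x i) (y i)

@[simp]
theorem piKronecker_apply (M : ι → Matrix m m ℂ) (x y : ι → m) :
    piKronecker M x y = ∏ i, M i (x i) (y i) :=
  rfl

theorem star_piKronecker (M : ι → Matrix m m ℂ) :
    star (piKronecker M) = piKronecker (star M) := by
  ext x y
  simp [Matrix.star_apply]

theorem piKronecker_permMatrix [DecidableEq m] (π : ι → Equiv.Perm m) :
    piKronecker (fun i ↦ (π i).permMatrix ℂ) =
      Equiv.Perm.permMatrix ℂ (Equiv.piCongrRight π) := by
  ext x y
  simp [Equiv.Perm.permMatrix, PEquiv.toMatrix_apply, Finset.prod_boole, funext_iff]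

theorem piKronecker_one [DecidableEq m] : piKronecker (1 : ι → Matrix m m ℂ) = 1 := by
  ext x y
  simp [Matrix.one_apply, Finset.prod_boole, funext_iff]

theorem piKronecker_add_smul_one [DecidableEq ι] [DecidableEq m] (M : ι → Matrix m m ℂ) (c : ℂ) :
    piKronecker (M + c • 1) = ∑ S : Finset ι, c ^ Sᶜ.card • piKronecker (S.piecewise M 1) := by
  rw [MultilinearMap.map_add_univ]
  refine Finset.sum_congr rfl fun S _ ↦ ?_
  rw [← Finset.prod_const, ← MultilinearMap.map_piecewise_smul]
  refine congrArg piKronecker (funext fun i ↦ ?_)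
  by_cases hi : i ∈ S <;> simp [hi]

variable [Fintype m] [DecidableEq ι]

theorem piKronecker_mul (M N : ι → Matrix m m ℂ) :
    piKronecker (M * N) = piKronecker M * piKronecker N := by
  ext x y
  simp [Matrix.mul_apply, Finset.prod_univ_sum, Finset.prod_mul_distrib]

theorem trace_piKronecker (M : ι → Matrix m m ℂ) :
    (piKronecker M).trace = ∏ i, (M i).trace := by
  simp [Matrix.trace, Finset.prod_univ_sum]

theorem star_dotProduct_piKronecker_compression {M q : ι → Matrix m m ℂ} {v : (ι → m) → ℂ}
    (hq : IsSelfAdjoint q) (hv : piKronecker q *ᵥ v = v) :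
    star v ⬝ᵥ piKronecker (q * M * q) *ᵥ v = star v ⬝ᵥ piKronecker M *ᵥ v := by
  have hstar : star v ᵥ* piKronecker q = star v := by
    conv_rhs => rw [← hv, Matrix.star_mulVec, ← Matrix.star_eq_conjTranspose, star_piKronecker,
      hq.star_eq]
  rw [piKronecker_mul, piKronecker_mul, ← Matrix.mulVec_mulVec, hv, ← Matrix.mulVec_mulVec,
    Matrix.dotProduct_mulVec, hstar]

variable [DecidableEq m]

/-- The embedding of a matrix algebra into its tensor power as the `i`-th tensor factor. -/
def siteEmbedding (i : ι) : Matrix m m ℂ →⋆ₙₐ[ℂ] Matrix (ι → m) (ι → m) ℂ where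
  toFun M := piKronecker (Function.update 1 i M)
  map_smul' c M := piKronecker.map_update_smul _ _ _ _
  map_zero' := piKronecker.map_update_zero _ _
  map_add' M N := piKronecker.map_update_add _ _ _ _
  map_mul' M N := by
    rw [← piKronecker_mul, ← Function.update_mul, mul_one]
  map_star' M := by
    rw [star_piKronecker, ← Function.update_star, star_one]

theorem norm_piKronecker_le (M : ι → Matrix m m ℂ) : ‖piKronecker M‖ ≤ ∏ i, ‖M i‖ := by
  suffices ∀ s : Finset ι, ‖piKronecker (s.piecewise M 1)‖ ≤ ∏ i ∈ s, ‖M i‖ by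
    simpa only [Finset.piecewise_univ] using this Finset.univ
  intro s
  induction s using Finset.induction_on with
  | empty =>
    rw [Finset.piecewise_empty, piKronecker_one, Finset.prod_empty]
    exact IsStarProjection.norm_le _ (.one _)
  | insert i s hi ih =>
    have hsplit : (insert i s).piecewise M (1 : ι → Matrix m m ℂ) =
        Function.update (1 : ι → Matrix m m ℂ) i (M i) * s.piecewise M 1 := by
      ext1 j
      rcases eq_or_ne j i with rfl | hj
      · simp [hi]
      · simp [hj]
    rw [hsplit, piKronecker_mul, Finset.prod_insert hi]
    calc _ ≤ ‖siteEmbedding i (M i)‖ * ‖piKronecker (s.piecewise M 1)‖ := norm_mul_le _ _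
      _ ≤ ‖M i‖ * ∏ i ∈ s, ‖M i‖ :=
        mul_le_mul (NonUnitalStarAlgHom.norm_apply_le _ _) ih (norm_nonneg _) (norm_nonneg _)

theorem star_dotProduct_piKronecker_le_add_smul_one {M : ι → Matrix m m ℂ} {c : ℂ} (hc : 0 ≤ c)
    {v : (ι → m) → ℂ} (hv : ∀ S : Finset ι, 0 ≤ star v ⬝ᵥ piKronecker (S.piecewise M 1) *ᵥ v) :
    star v ⬝ᵥ piKronecker M *ᵥ v ≤ star v ⬝ᵥ piKronecker (M + c • 1) *ᵥ v := by
  simp only [piKronecker_add_smul_one, Matrix.sum_mulVec, Matrix.smul_mulVec, dotProduct_sum,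
    dotProduct_smul]
  refine le_trans (by simp) <| Finset.single_le_sum
    (fun S _ ↦ smul_nonneg (pow_nonneg hc _) (hv S)) (Finset.mem_univ Finset.univ)

theorem norm_star_dotProduct_mulVec_le {n : Type*} [Fintype n] [DecidableEq n] (M : Matrix n n ℂ)
    (v : n → ℂ) : ‖star v ⬝ᵥ M *ᵥ v‖ ≤ ‖M‖ * ∑ x, Complex.normSq (v x) := by
  have hnorm : ‖WithLp.toLp 2 v‖ ^ 2 = ∑ x, Complex.normSq (v x) := by
    simp [EuclideanSpace.norm_sq_eq, Complex.normSq_eq_norm_sq]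
  calc ‖star v ⬝ᵥ M *ᵥ v‖ = ‖inner ℂ (WithLp.toLp 2 v) (WithLp.toLp 2 (M *ᵥ v))‖ := by
        rw [EuclideanSpace.inner_eq_star_dotProduct, dotProduct_comm]
    _ ≤ ‖WithLp.toLp 2 v‖ * (‖M‖ * ‖WithLp.toLp 2 v‖) :=
      (norm_inner_le_norm _ _).trans <|
        mul_le_mul_of_nonneg_left (Matrix.l2_opNorm_mulVec M (WithLp.toLp 2 v)) (norm_nonneg _)
    _ = ‖M‖ * ∑ x, Complex.normSq (v x) := by rw [← hnorm]; ring

end TensorPower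

section PartialSwap

variable {ι m κ : Type*}

/-- Grouping all first and all second tensor factors of a tensor power of a bipartite system. -/
abbrev unzipEquiv (ι m : Type*) : (ι → m × m) ≃ (ι → m) × (ι → m) :=
  Equiv.arrowProdEquivProdArrow ι (fun _ ↦ m) (fun _ ↦ m)

/-- The vector `w ⊗ w` for `w` in the tensor power `⨂ i, ℂ^m`, with the two copies of each of the
tensor factors grouped together. -/
def siteSquare (w : (ι → m) → ℂ) : (ι → m × m) → ℂ :=
  tensorSquare w ∘ unzipEquiv ι m

/-- On the two copies of a bipartite system with parts `⨂ i, ℂ^κ`, the exchange of the first parts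
of the two copies at the sites in `S`. -/
def partialSwap [DecidableEq ι] (κ : Type*) (S : Finset ι) :
    Equiv.Perm (ι → (κ × κ) × (κ × κ)) :=
  Equiv.piCongrRight (S.piecewise (fun _ ↦ swapFst κ κ) 1)

/-- The bipartition of `ι` copies of a pair of systems that puts the first systems at the sites in
`S` on one side, and all the others on the other side. -/
def siteBipartition [DecidableEq ι] (κ : Type*) (S : Finset ι) :
    ({i // i ∈ S} → κ) × (({i // i ∉ S} → κ) × (ι → κ)) ≃ (ι → κ × κ) :=
  (Equiv.prodAssoc _ _ _).symm.trans <|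
    ((Equiv.piEquivPiSubtypeProd (· ∈ S) fun _ ↦ κ).symm.prodCongr (Equiv.refl _)).trans <|
      (unzipEquiv ι κ).symm

variable [Fintype ι] [DecidableEq ι]

theorem sum_normSq_siteSquare [Fintype m] (w : (ι → m) → ℂ) :
    ∑ z, Complex.normSq (siteSquare w z) = (∑ x, Complex.normSq (w x)) ^ 2 := by
  rw [sq, Fintype.sum_mul_sum, ← Fintype.sum_prod_type',
    ← (unzipEquiv ι m).sum_comp]
  simp [siteSquare, tensorSquare]

theorem piKronecker_kronecker_mulVec_siteSquare [Fintype m] (A : ι → Matrix m m ℂ)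
    (w : (ι → m) → ℂ) :
    piKronecker (fun i ↦ A i ⊗ₖ A i) *ᵥ siteSquare w = siteSquare (piKronecker A *ᵥ w) := by
  ext z
  simp only [siteSquare, tensorSquare, Function.comp_apply, Matrix.mulVec, dotProduct]
  rw [Fintype.sum_mul_sum, ← Fintype.sum_prod_type',
    ← (unzipEquiv ι m).sum_comp]
  refine Finset.sum_congr rfl fun y _ ↦ ?_
  simp [Finset.prod_mul_distrib, mul_mul_mul_comm]

theorem piKronecker_piecewise_swapFst [DecidableEq κ] (S : Finset ι) :
    piKronecker (S.piecewise (fun _ ↦ (swapFst κ κ).permMatrix ℂ) 1) =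
      (partialSwap κ S).permMatrix ℂ := by
  rw [partialSwap, ← piKronecker_permMatrix]
  refine congrArg piKronecker (funext fun i ↦ ?_)
  by_cases hi : i ∈ S <;> simp [hi]

variable [Fintype κ]

theorem star_siteSquare_dotProduct_partialSwap_univ (ψ : (ι → κ) × (ι → κ) → ℂ) :
    star (siteSquare (ψ ∘ unzipEquiv ι κ)) ⬝ᵥ
        (siteSquare (ψ ∘ unzipEquiv ι κ) ∘ partialSwap κ Finset.univ) =
      (reducedState ψ * reducedState ψ).trace := by
  let e := unzipEquiv ι κ
  refine star_dotProduct_comp_perm_eq_trace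
    ((e.symm.prodCongr e.symm).trans (unzipEquiv ι (κ × κ)).symm) rfl ?_
  ext z i <;> simp [e, partialSwap, swapFst, Equiv.arrowProdEquivProdArrow]

theorem star_siteSquare_dotProduct_partialSwap_nonneg (w : (ι → κ × κ) → ℂ) (S : Finset ι) :
    0 ≤ star (siteSquare w) ⬝ᵥ (siteSquare w ∘ partialSwap κ S) := by
  let e := siteBipartition κ S
  rw [star_dotProduct_comp_perm_eq_trace (ψ := w ∘ e)
    ((e.prodCongr e).trans (unzipEquiv ι (κ × κ)).symm) rfl]
  · exact trace_reducedState_mul_self_nonneg _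
  · ext z i <;> by_cases hi : i ∈ S <;>
      simp [e, partialSwap, swapFst, siteBipartition, Equiv.arrowProdEquivProdArrow, hi]

theorem trace_reducedState_mul_self_le_compression [DecidableEq κ] {ψ : (ι → κ) × (ι → κ) → ℂ}
    {q : ι → Matrix ((κ × κ) × (κ × κ)) ((κ × κ) × (κ × κ)) ℂ} (hq : IsSelfAdjoint q)
    (hfix : piKronecker q *ᵥ siteSquare (ψ ∘ unzipEquiv ι κ) = siteSquare (ψ ∘ unzipEquiv ι κ))
    {c : ℂ} (hc : 0 ≤ c) :
    (reducedState ψ * reducedState ψ).trace ≤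
      star (siteSquare (ψ ∘ unzipEquiv ι κ)) ⬝ᵥ
        piKronecker (q * ((fun _ ↦ (swapFst κ κ).permMatrix ℂ) + c • 1) * q) *ᵥ
          siteSquare (ψ ∘ unzipEquiv ι κ) := by
  set v := siteSquare (ψ ∘ unzipEquiv ι κ)
  have hpartial : ∀ S : Finset ι,
      piKronecker (S.piecewise (fun _ ↦ (swapFst κ κ).permMatrix ℂ) 1) *ᵥ v =
        v ∘ partialSwap κ S := fun S ↦ by
    rw [piKronecker_piecewise_swapFst, Matrix.permMatrix_mulVec]
  rw [star_dotProduct_piKronecker_compression hq hfix,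
    ← star_siteSquare_dotProduct_partialSwap_univ, ← hpartial, Finset.piecewise_univ]
  refine star_dotProduct_piKronecker_le_add_smul_one hc fun S ↦ ?_
  rw [hpartial]
  exact star_siteSquare_dotProduct_partialSwap_nonneg _ S

end PartialSwap

section AntisymmetricTensors

theorem isSymmetry_permMatrix {m : Type*} [Fintype m] [DecidableEq m] {π : Equiv.Perm m}
    (h : π * π = 1) : IsSymmetry (π.permMatrix ℂ) where
  isSelfAdjoint := by
    rw [IsSelfAdjoint, Matrix.star_eq_conjTranspose, Matrix.conjTranspose_permMatrix,
      inv_eq_of_mul_eq_one_left h]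
  mul_self := by rw [← Matrix.permMatrix_mul, h, Matrix.permMatrix_one]

theorem permMatrix_prodCongr {m n : Type*} [DecidableEq m] [DecidableEq n]
    (σ : Equiv.Perm m) (τ : Equiv.Perm n) :
    Equiv.Perm.permMatrix ℂ (σ.prodCongr τ) = σ.permMatrix ℂ ⊗ₖ τ.permMatrix ℂ := by
  ext x y
  simp [Equiv.Perm.permMatrix, PEquiv.toMatrix_apply, Prod.ext_iff, ← ite_and, and_comm]

theorem negEigenproj_kronecker_negEigenproj {m n : Type*} [Fintype m] [DecidableEq m]
    [Fintype n] [DecidableEq n] (s : Matrix m m ℂ) (t : Matrix n n ℂ) :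
    negEigenproj s ⊗ₖ negEigenproj t = negEigenproj (s ⊗ₖ 1) * negEigenproj (1 ⊗ₖ t) := by
  have left : negEigenproj (s ⊗ₖ (1 : Matrix n n ℂ)) = negEigenproj s ⊗ₖ 1 := by
    ext x y
    by_cases h : x.2 = y.2 <;> simp [negEigenproj, Matrix.one_apply, Prod.ext_iff, h]
  have right : negEigenproj ((1 : Matrix m m ℂ) ⊗ₖ t) = 1 ⊗ₖ negEigenproj t := by
    ext x y
    by_cases h : x.1 = y.1 <;> simp [negEigenproj, Matrix.one_apply, Prod.ext_iff, h]
  rw [left, right, ← Matrix.mul_kronecker_mul, mul_one, one_mul]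

/-- The projection onto the antisymmetric tensors in `ℂ^κ ⊗ ℂ^κ`; `asymProj d` is the case of
`κ = Fin d`. -/
def antisymmetrizer (κ : Type*) [Fintype κ] [DecidableEq κ] : Matrix (κ × κ) (κ × κ) ℂ :=
  negEigenproj (Equiv.Perm.permMatrix ℂ (Equiv.prodComm κ κ))

variable {κ : Type*} [Fintype κ] [DecidableEq κ]

theorem isStarProjection_antisymmetrizer : IsStarProjection (antisymmetrizer κ) :=
  (isSymmetry_permMatrix (Equiv.ext fun _ ↦ rfl)).isStarProjection_negEigenproj

theorem norm_compression_swapFst_add_quarter_le :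
    ‖(antisymmetrizer κ ⊗ₖ antisymmetrizer κ) *
        ((swapFst κ κ).permMatrix ℂ + (1 / 4 : ℂ) • 1) *
        (antisymmetrizer κ ⊗ₖ antisymmetrizer κ)‖ ≤ 3 / 4 := by
  simp only [antisymmetrizer, negEigenproj_kronecker_negEigenproj]
  rw [← Matrix.permMatrix_one, ← permMatrix_prodCongr, ← permMatrix_prodCongr]
  refine IsSymmetry.norm_compression_add_quarter_le (isSymmetry_permMatrix (Equiv.ext fun _ ↦ rfl))
    (isSymmetry_permMatrix (Equiv.ext fun _ ↦ rfl)) (isSymmetry_permMatrix (Equiv.ext fun _ ↦ rfl))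
    ?_ ?_ ?_ <;>
  · simp only [Commute, SemiconjBy, ← Matrix.permMatrix_mul]
    congr 1

theorem re_trace_reducedState_mul_self_le_pow {ι : Type*} [Fintype ι] [DecidableEq ι]
    {ψ : (ι → κ) × (ι → κ) → ℂ} (hψ : ∑ x, Complex.normSq (ψ x) = 1)
    (hanti : piKronecker (fun _ ↦ antisymmetrizer κ) *ᵥ (ψ ∘ unzipEquiv ι κ) =
      ψ ∘ unzipEquiv ι κ) :
    (reducedState ψ * reducedState ψ).trace.re ≤ (3 / 4) ^ Fintype.card ι := by
  set v := siteSquare (ψ ∘ unzipEquiv ι κ)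
  let q : ι → Matrix ((κ × κ) × (κ × κ)) ((κ × κ) × (κ × κ)) ℂ :=
    fun _ ↦ antisymmetrizer κ ⊗ₖ antisymmetrizer κ
  let M := q * ((fun _ ↦ (swapFst κ κ).permMatrix ℂ) + (1 / 4 : ℂ) • 1) * q
  have hq : IsSelfAdjoint q := funext fun _ ↦ by
    simp only [q, Pi.star_apply, Matrix.star_eq_conjTranspose, Matrix.conjTranspose_kronecker]
    rw [← Matrix.star_eq_conjTranspose, isStarProjection_antisymmetrizer.isSelfAdjoint.star_eq]
  have hfix : piKronecker q *ᵥ v = v := by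
    rw [piKronecker_kronecker_mulVec_siteSquare (fun _ ↦ antisymmetrizer κ), hanti]
  have hv : ∑ z, Complex.normSq (v z) = 1 := by
    rw [sum_normSq_siteSquare, ← one_pow 2, ← hψ]
    exact congrArg (· ^ 2) ((unzipEquiv ι κ).sum_comp fun x ↦ Complex.normSq (ψ x))
  calc (reducedState ψ * reducedState ψ).trace.re
      ≤ ‖star v ⬝ᵥ piKronecker M *ᵥ v‖ :=
        (Complex.le_def.1 <| trace_reducedState_mul_self_le_compression hq hfix
          (by positivity)).1.trans (Complex.re_le_norm _)
    _ ≤ ‖piKronecker M‖ := by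
      simpa only [hv, mul_one] using norm_star_dotProduct_mulVec_le (piKronecker M) v
    _ ≤ ∏ _i : ι, (3 / 4 : ℝ) := (norm_piKronecker_le M).trans <|
      Finset.prod_le_prod (fun _ _ ↦ norm_nonneg _) fun _ _ ↦
        norm_compression_swapFst_add_quarter_le
    _ = (3 / 4) ^ Fintype.card ι := by rw [Finset.prod_const, Finset.card_univ]

end AntisymmetricTensors

section AntisymmetricState

open scoped MatrixOrder

theorem IsDensityMatrix.piKronecker {ι m : Type*} [Fintype ι] [DecidableEq ι] [Fintype m]
    {ρ : ι → Matrix m m ℂ} (h : ∀ i, IsDensityMatrix (ρ i)) :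
    IsDensityMatrix (piKronecker ρ) where
  posSemidef := by
    classical
    choose B hB using fun i ↦
      CStarAlgebra.nonneg_iff_eq_star_mul_self.1 (h i).posSemidef.nonneg
    have hρ : ρ = star B * B := funext hB
    rw [hρ, piKronecker_mul, ← star_piKronecker]
    exact Matrix.posSemidef_conjTranspose_mul_self _
  trace_eq_one := by
    rw [trace_piKronecker]
    exact Finset.prod_eq_one fun i _ ↦ (h i).trace_eq_one

theorem IsDensityMatrix.submatrix {m n : Type*} [Fintype m] [Fintype n] {ρ : Matrix m m ℂ}
    (h : IsDensityMatrix ρ) (e : n ≃ m) : IsDensityMatrix (ρ.submatrix e e) where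
  posSemidef := h.posSemidef.submatrix e
  trace_eq_one := (e.sum_comp fun x ↦ ρ x x).trans h.trace_eq_one

variable {d n : ℕ}

theorem asymProj_eq_antisymmetrizer : asymProj d = antisymmetrizer (Fin d) := by
  ext p q
  simp [asymProj, antisymmetrizer, negEigenproj, Equiv.Perm.permMatrix, PEquiv.toMatrix_apply,
    Matrix.one_apply, Prod.ext_iff, and_comm]

theorem isStarProjection_asymProj : IsStarProjection (asymProj d) :=
  asymProj_eq_antisymmetrizer ▸ isStarProjection_antisymmetrizer

theorem trace_asymProj : (asymProj d).trace = d.choose 2 := by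
  have hdiag : ∀ p : Fin d × Fin d,
      asymProj d p p = 1 / 2 * (1 - if p.1 = p.2 then 1 else 0) := fun p ↦ by
    simp [asymProj, eq_comm]
  simp only [Matrix.trace, Matrix.diag, hdiag, ← Finset.mul_sum, Finset.sum_sub_distrib,
    Fintype.sum_prod_type, Finset.sum_ite_eq, Finset.mem_univ, if_true, Finset.sum_const,
    Finset.card_univ, Fintype.card_prod, Fintype.card_fin, Nat.cast_mul, nsmul_eq_mul, mul_one,
    Nat.cast_choose_two]
  ring

theorem isDensityMatrix_antisymState (hd : 2 ≤ d) : IsDensityMatrix (antisymState d) where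
  posSemidef := by
    have hproj : (asymProj d).PosSemidef :=
      Matrix.nonneg_iff_posSemidef.1 isStarProjection_asymProj.nonneg
    exact hproj.smul (by positivity)
  trace_eq_one := by
    rw [antisymState, Matrix.trace_smul, trace_asymProj, smul_eq_mul, one_div_mul_cancel]
    exact_mod_cast (Nat.choose_pos hd).ne'

theorem asymProj_mul_antisymState : asymProj d * antisymState d = antisymState d := by
  rw [antisymState, mul_smul_comm, isStarProjection_asymProj.isIdempotentElem.eq]

theorem asymPow_eq_submatrix : asymPow d n =
    (piKronecker fun _ ↦ asymProj d).submatrix (unzipEquiv (Fin n) (Fin d)).symm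
      (unzipEquiv (Fin n) (Fin d)).symm :=
  rfl

theorem alphaPow_eq_submatrix : alphaPow d n =
    (piKronecker fun _ ↦ antisymState d).submatrix (unzipEquiv (Fin n) (Fin d)).symm
      (unzipEquiv (Fin n) (Fin d)).symm :=
  rfl

theorem isDensityMatrix_alphaPow (hd : 2 ≤ d) : IsDensityMatrix (alphaPow d n) :=
  alphaPow_eq_submatrix ▸
    (IsDensityMatrix.piKronecker fun _ ↦ isDensityMatrix_antisymState hd).submatrix _

theorem asymPow_mul_alphaPow : asymPow d n * alphaPow d n = alphaPow d n := by
  rw [asymPow_eq_submatrix, alphaPow_eq_submatrix, Matrix.submatrix_mul_equiv, ← piKronecker_mul]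
  exact congrArg (fun M ↦ (piKronecker M).submatrix _ _)
    (funext fun _ ↦ asymProj_mul_antisymState)

theorem re_trace_reducedState_mul_self_le_pow_of_asymPow_mulVec
    {ψ : (Fin n → Fin d) × (Fin n → Fin d) → ℂ}
    (hψ : ∑ x, Complex.normSq (ψ x) = 1) (hfix : asymPow d n *ᵥ ψ = ψ) :
    (reducedState ψ * reducedState ψ).trace.re ≤ (3 / 4) ^ n := by
  have hanti : (piKronecker fun _ ↦ asymProj d) *ᵥ (ψ ∘ unzipEquiv (Fin n) (Fin d)) =
      ψ ∘ unzipEquiv (Fin n) (Fin d) := by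
    conv_rhs => rw [← hfix, asymPow_eq_submatrix, Matrix.submatrix_mulVec_equiv]
    rfl
  simpa using re_trace_reducedState_mul_self_le_pow hψ (asymProj_eq_antisymmetrizer ▸ hanti)

theorem le_EoF_alphaPow (hd : 2 ≤ d) : n * Real.logb 2 (4 / 3) ≤ EoF (alphaPow d n) := by
  have hlog : (n : ℝ) * Real.logb 2 (4 / 3) = -Real.logb 2 ((3 / 4) ^ n) := by
    rw [Real.logb_pow, ← mul_neg, ← Real.logb_inv, inv_div]
  rw [hlog]
  exact le_EoF (isDensityMatrix_alphaPow hd) asymPow_mul_alphaPow fun ψ hψ hfix ↦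
    (isDensityMatrix_reducedState hψ).neg_logb_le_vnEntropy
      (re_trace_reducedState_mul_self_le_pow_of_asymPow_mulVec hψ hfix)

theorem EoF_alphaPow_le (hd : 2 ≤ d) : EoF (alphaPow d n) ≤ n * Real.logb 2 d := by
  simpa [Real.logb_pow] using EoF_le_logb_card (isDensityMatrix_alphaPow (n := n) hd)

end AntisymmetricState

/-- For every integer `d ≥ 2`,
`liminf_{n→∞} (1/n) E_F(α_d^{⊗n}) ≥ log₂(4/3)`
(the paper's lower bound `E_C(α_d) ≥ log₂(4/3)` on the entanglement cost). -/
theorem antisym_entanglement_cost_lower_bound (d : ℕ) (hd : 2 ≤ d) :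
    Real.logb 2 (4 / 3) ≤
      Filter.liminf (fun n : ℕ => EoF (alphaPow d n) / n) Filter.atTop := by
  have hbdd : Filter.IsBoundedUnder (· ≤ ·) Filter.atTop fun n : ℕ ↦ EoF (alphaPow d n) / n := by
    refine ⟨Real.logb 2 d, Filter.eventually_map.2 ?_⟩
    filter_upwards [Filter.eventually_gt_atTop 0] with n hn
    rw [div_le_iff₀' (Nat.cast_pos.2 hn)]
    exact EoF_alphaPow_le hd
  refine Filter.le_liminf_of_le hbdd.isCoboundedUnder_ge ?_
  filter_upwards [Filter.eventually_gt_atTop 0] with n hn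
  rw [le_div_iff₀' (Nat.cast_pos.2 hn)]
  exact le_EoF_alphaPow hd

end
end

section
/- Let m ≥ 1 be an integer, let H_{A'} and H_{B'} be finite-dimensional Hilbert spaces, let σ be a density operator on H_{A'} ⊗ H_{B'}, and let U_1, …, U_{2^m} be unitaries on H_{A'} ⊗ H_{B'}. Let |Φ⟩ = 2^{−m/2} ∑_{i=1}^{2^m} |i⟩_A |i⟩_B be the maximally entangled state on ℂ^{2^m} ⊗ ℂ^{2^m}, let U = ∑_{i=1}^{2^m} |i⟩⟨i|_A ⊗ |i⟩⟨i|_B ⊗ U_i, and let γ = U (|Φ⟩⟨Φ| ⊗ σ) U^†, a density operator on (ℂ^{2^m} ⊗ H_{A'}) ⊗ (ℂ^{2^m} ⊗ H_{B'}). Then the squashed entanglement of γ with respect to the bipartition AA' : BB' satisfies E_sq(γ) ≥ m. -/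
open scoped BigOperators
open Classical
open scoped ComplexOrder

noncomputable section

/-- The controlled unitary `U = ∑ᵢ |i⟩⟨i|_A ⊗ |i⟩⟨i|_B ⊗ Uᵢ` on
`ℂ^{2^m} ⊗ ℂ^{2^m} ⊗ (H_{A'} ⊗ H_{B'})`. -/
def keyU (m : ℕ) {α' β' : Type*} (U : Fin (2 ^ m) → Matrix (α' × β') (α' × β') ℂ) :
    Matrix ((Fin (2 ^ m) × Fin (2 ^ m)) × (α' × β'))
      ((Fin (2 ^ m) × Fin (2 ^ m)) × (α' × β')) ℂ :=
  Matrix.of fun p q =>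
    if p.1.1 = p.1.2 ∧ q.1.1 = q.1.2 ∧ p.1.1 = q.1.1 ∧ p.1.2 = q.1.2
    then U p.1.1 p.2 q.2 else 0

/-- `|Φ⟩⟨Φ| ⊗ σ` with `|Φ⟩ = 2^{-m/2} ∑ᵢ |i⟩|i⟩` the maximally entangled state of
rank `2^m`. -/
def phiSigma (m : ℕ) {α' β' : Type*} (σ : Matrix (α' × β') (α' × β') ℂ) :
    Matrix ((Fin (2 ^ m) × Fin (2 ^ m)) × (α' × β'))
      ((Fin (2 ^ m) × Fin (2 ^ m)) × (α' × β')) ℂ :=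
  Matrix.of fun p q =>
    (if p.1.1 = p.1.2 ∧ q.1.1 = q.1.2 then (1 / (2 ^ m : ℂ)) else 0) * σ p.2 q.2

/-!
The key state is `γ = W σ Wᴴ` for the isometry `W = |ι|^{-1/2} ∑ i, |i⟩_A |i⟩_B ⊗ U i`, with
`|ι| = 2 ^ m`. Every extension of `γ` to `ABE` has the form `(W ⊗ 1) τ (W ⊗ 1)ᴴ`, because the
projection onto the complement of the range of `W` has expectation zero in it. Its marginals on
`AE` and on `BE` are block diagonal in the key register with uniform weights, so each carries an
extra entropy `m`, while those on `ABE` and `E` have the entropies of `τ`. Hence `I(A;B|E)` equals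
`2 m` plus the average of `I(A';B'|E)` over the conjugates of `τ` by the `U i`, and the latter is
nonnegative by strong subadditivity.

Strong subadditivity follows from monotonicity of the relative entropy under restriction. The
relative entropy is the limit as `T → ∞` of the integral over `0 < t < T` of the resolvent form
`⟨ρ, (L_σ + t R_ρ)⁻¹ ρ⟩`, minus `tr ρ * log T`. Each resolvent form is the maximum of a concave
quadratic functional over all operators, hence can only decrease when the maximum is restricted
to a subalgebra.
-/

open Matrix Filter Topology
open scoped Kronecker

section LogIncrement

variable {κ : Type*} [Fintype κ] {w p q : κ → ℝ} {t : ℝ}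

/-- For weights `w` on pairs of eigenvalues `p k` of `ρ` and `q k` of `σ`, the function of `t` that
vanishes at `t = 0` and agrees with `(∑ k, w k * p k) * log t` plus the relative entropy
`∑ k, w k * p k * (log (p k) - log (q k))` up to `o(1)` as `t → ∞`. -/
def logIncrement (w p q : κ → ℝ) (t : ℝ) : ℝ :=
  ∑ k, w k * p k * (Real.log (q k + t * p k) - Real.log (q k))

/-- The derivative of `logIncrement` in `t > 0`; for eigenvalues of `ρ` and `σ` weighted by the
overlaps of their eigenvectors it is the quadratic form `⟨ρ, (L_σ + t R_ρ)⁻¹ ρ⟩` in the left and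
right multiplications `L_σ` and `R_ρ`. -/
def resolventForm (w p q : κ → ℝ) (t : ℝ) : ℝ :=
  ∑ k, w k * (p k ^ 2 / (q k + t * p k))

lemma hasDerivAt_logIncrement (hp : ∀ k, 0 ≤ p k) (hq : ∀ k, 0 ≤ q k) (ht : 0 < t) :
    HasDerivAt (logIncrement w p q) (resolventForm w p q t) t := by
  refine HasDerivAt.fun_sum fun k _ => ?_
  rcases (hp k).eq_or_lt with hpk | hpk
  · simpa [← hpk] using hasDerivAt_const t (0 : ℝ)
  · have hpos : 0 < q k + t * p k := add_pos_of_nonneg_of_pos (hq k) (mul_pos ht hpk)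
    have hlin : HasDerivAt (fun s => q k + s * p k) (p k) t := by
      simpa using ((hasDerivAt_id t).mul_const (p k)).const_add (q k)
    refine (((hlin.log hpos.ne').sub_const (Real.log (q k))).const_mul (w k * p k)).congr_deriv ?_
    ring

lemma continuousOn_logIncrement (hp : ∀ k, 0 ≤ p k) (hq : ∀ k, 0 ≤ q k)
    (hsupp : ∀ k, q k = 0 → w k * p k = 0) :
    ContinuousOn (logIncrement w p q) (Set.Ici 0) := by
  refine continuousOn_finsetSum _ fun k _ => ?_
  rcases (hq k).eq_or_lt with hqk | hqk
  · simpa [hsupp k hqk.symm] using continuousOn_const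
  · refine continuousOn_const.mul (ContinuousOn.sub (ContinuousOn.log ?_ fun s hs => ?_)
      continuousOn_const)
    · fun_prop
    · exact (add_pos_of_pos_of_nonneg hqk (mul_nonneg hs (hp k))).ne'

lemma tendsto_logIncrement_sub_log (hp : ∀ k, 0 ≤ p k) (hq : ∀ k, 0 ≤ q k) :
    Tendsto (fun t => logIncrement w p q t - (∑ k, w k * p k) * Real.log t) atTop
      (𝓝 (∑ k, w k * p k * (Real.log (p k) - Real.log (q k)))) := by
  simp only [logIncrement, Finset.sum_mul, ← Finset.sum_sub_distrib]
  refine tendsto_finsetSum _ fun k _ => ?_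
  rcases (hp k).eq_or_lt with hpk | hpk
  · simp [← hpk]
  · have hlim : Tendsto (fun t : ℝ => q k / t + p k) atTop (𝓝 (p k)) := by
      simpa using (tendsto_id.const_div_atTop (q k)).add_const (p k)
    refine (((hlim.log hpk.ne').sub_const (Real.log (q k))).const_mul (w k * p k)).congr' ?_
    filter_upwards [eventually_gt_atTop 0] with t ht
    have hpos : 0 < q k + t * p k := add_pos_of_nonneg_of_pos (hq k) (mul_pos ht hpk)
    have hlog : Real.log (q k / t + p k) = Real.log (q k + t * p k) - Real.log t := by
      rw [← Real.log_div hpos.ne' ht.ne', add_div, mul_div_cancel_left₀ _ ht.ne']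
    rw [hlog]
    ring

lemma sum_mul_log_sub_log_le_of_resolventForm_le {κ' : Type*} [Fintype κ'] {w' p' q' : κ' → ℝ}
    (hp : ∀ k, 0 ≤ p k) (hq : ∀ k, 0 ≤ q k) (hp' : ∀ k, 0 ≤ p' k) (hq' : ∀ k, 0 ≤ q' k)
    (hsupp : ∀ k, q k = 0 → w k * p k = 0) (hsupp' : ∀ k, q' k = 0 → w' k * p' k = 0)
    (hsum : ∑ k, w' k * p' k = ∑ k, w k * p k)
    (hle : ∀ t, 0 < t → resolventForm w' p' q' t ≤ resolventForm w p q t) :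
    ∑ k, w' k * p' k * (Real.log (p' k) - Real.log (q' k)) ≤
      ∑ k, w k * p k * (Real.log (p k) - Real.log (q k)) := by
  have hderiv (t : ℝ) (ht : 0 < t) := (hasDerivAt_logIncrement (w := w) hp hq ht).sub
    (hasDerivAt_logIncrement (w := w') hp' hq' ht)
  have hmono : MonotoneOn (logIncrement w p q - logIncrement w' p' q') (Set.Ici 0) := by
    refine monotoneOn_of_deriv_nonneg (convex_Ici 0)
      ((continuousOn_logIncrement hp hq hsupp).sub (continuousOn_logIncrement hp' hq' hsupp'))
      ?_ ?_ <;> rw [interior_Ici]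
    · exact fun t ht => (hderiv t ht).differentiableAt.differentiableWithinAt
    · intro t ht
      rw [(hderiv t ht).deriv]
      exact sub_nonneg.2 (hle t ht)
  refine le_of_tendsto_of_tendsto (tendsto_logIncrement_sub_log hp' hq')
    (tendsto_logIncrement_sub_log hp hq) ?_
  filter_upwards [eventually_ge_atTop 0] with t ht
  have hnonneg : 0 ≤ logIncrement w p q t - logIncrement w' p' q' t := by
    simpa [logIncrement] using hmono Set.self_mem_Ici ht ht
  rw [hsum]
  linarith

end LogIncrement

section Spectral

variable {ι : Type*} [Fintype ι] [DecidableEq ι] {ρ σ : Matrix ι ι ℂ}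

lemma continuousOn_real_spectrum (f : ℝ → ℝ) (M : Matrix ι ι ℂ) : ContinuousOn f (spectrum ℝ M) :=
  M.finite_real_spectrum.continuousOn f

lemma cfc_eq_eigenvectorUnitary_mul (hρ : ρ.IsHermitian) (f : ℝ → ℝ) :
    cfc f ρ = (hρ.eigenvectorUnitary : Matrix ι ι ℂ) *
      diagonal (fun i => (f (hρ.eigenvalues i) : ℂ)) * (hρ.eigenvectorUnitary : Matrix ι ι ℂ)ᴴ :=
  hρ.cfc_eq f

/-- The squared overlaps `|⟨v_j, u_i⟩|²` of the eigenvectors `u_i` of `ρ` and `v_j` of `σ`, indexed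
by `(j, i)`. -/
def eigenOverlap (hρ : ρ.IsHermitian) (hσ : σ.IsHermitian) (k : ι × ι) : ℝ :=
  Complex.normSq (((hσ.eigenvectorUnitary : Matrix ι ι ℂ)ᴴ * hρ.eigenvectorUnitary) k.1 k.2)

lemma trace_cfc_mul_cfc (hρ : ρ.IsHermitian) (hσ : σ.IsHermitian) (f g : ℝ → ℝ) :
    (trace (cfc f σ * cfc g ρ)).re =
      ∑ k, eigenOverlap hρ hσ k * f (hσ.eigenvalues k.1) * g (hρ.eigenvalues k.2) := by
  rw [cfc_eq_eigenvectorUnitary_mul hρ, cfc_eq_eigenvectorUnitary_mul hσ]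
  simp only [eigenOverlap]
  generalize (hρ.eigenvectorUnitary : Matrix ι ι ℂ) = P
  generalize (hσ.eigenvectorUnitary : Matrix ι ι ℂ) = V
  have hcycle (F G : Matrix ι ι ℂ) :
      trace (V * F * Vᴴ * (P * G * Pᴴ)) = trace (F * (Vᴴ * P) * (G * (Vᴴ * P)ᴴ)) := by
    rw [Matrix.mul_assoc V, Matrix.mul_assoc V, trace_mul_comm V]
    simp only [conjTranspose_mul, conjTranspose_conjTranspose, Matrix.mul_assoc]
  rw [hcycle]
  simp only [trace, diag_apply, Matrix.mul_apply (M := diagonal _ * _), diagonal_mul,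
    conjTranspose_apply, Complex.re_sum, Fintype.sum_prod_type]
  refine Finset.sum_congr rfl fun j _ => Finset.sum_congr rfl fun i _ => ?_
  simp [Complex.normSq_apply]
  ring

/-- Umegaki's relative entropy `tr ρ (log ρ - log σ)`, in nats. As `Real.log 0 = 0`, this is the
usual quantity only if the kernel of `σ` is contained in that of `ρ`. -/
def relEntropy (ρ σ : Matrix ι ι ℂ) : ℝ :=
  (trace (ρ * (cfc Real.log ρ - cfc Real.log σ))).re

lemma re_trace_mul_cfc (hρ : ρ.IsHermitian) (hσ : σ.IsHermitian) (f : ℝ → ℝ) :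
    (trace (ρ * cfc f σ)).re =
      ∑ k, eigenOverlap hρ hσ k * hρ.eigenvalues k.2 * f (hσ.eigenvalues k.1) := by
  rw [trace_mul_comm]
  simpa [cfc_id' ℝ ρ hρ.isSelfAdjoint, mul_right_comm] using trace_cfc_mul_cfc hρ hσ f (fun x => x)

lemma re_trace_eq_sum_eigenOverlap (hρ : ρ.IsHermitian) (hσ : σ.IsHermitian) :
    ρ.trace.re = ∑ k, eigenOverlap hρ hσ k * hρ.eigenvalues k.2 := by
  simpa [cfc_const_one ℝ σ hσ.isSelfAdjoint] using re_trace_mul_cfc hρ hσ (fun _ => 1)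

lemma mul_cfc_log (hρ : ρ.IsHermitian) :
    ρ * cfc Real.log ρ = cfc (fun x => x * Real.log x) ρ := by
  rw [cfc_mul _ _ ρ (continuousOn_real_spectrum _ ρ) (continuousOn_real_spectrum _ ρ),
    cfc_id' ℝ ρ hρ.isSelfAdjoint]

lemma relEntropy_eq_sum (hρ : ρ.IsHermitian) (hσ : σ.IsHermitian) :
    relEntropy ρ σ = ∑ k, eigenOverlap hρ hσ k * hρ.eigenvalues k.2 *
      (Real.log (hρ.eigenvalues k.2) - Real.log (hσ.eigenvalues k.1)) := by
  have hself : (trace (ρ * cfc Real.log ρ)).re =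
      ∑ k, eigenOverlap hρ hσ k * hρ.eigenvalues k.2 * Real.log (hρ.eigenvalues k.2) := by
    rw [mul_cfc_log hρ]
    simpa [cfc_const_one ℝ σ hσ.isSelfAdjoint, mul_assoc]
      using trace_cfc_mul_cfc hρ hσ (fun _ => 1) (fun x => x * Real.log x)
  rw [relEntropy, Matrix.mul_sub, trace_sub, Complex.sub_re, hself, re_trace_mul_cfc hρ hσ,
    ← Finset.sum_sub_distrib]
  simp only [mul_sub]

lemma vnEntropy_eq_neg_re_trace (hρ : ρ.IsHermitian) :
    vnEntropy ρ = -(trace (ρ * cfc Real.log ρ)).re / Real.log 2 := by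
  have htrace : trace (ρ * cfc Real.log ρ) =
      ∑ i, ((hρ.eigenvalues i * Real.log (hρ.eigenvalues i) : ℝ) : ℂ) := by
    rw [mul_cfc_log hρ, cfc_eq_eigenvectorUnitary_mul hρ, trace_mul_cycle]
    simp [← star_eq_conjTranspose]
  rw [vnEntropy, dif_pos hρ, htrace, ← Complex.ofReal_sum, Complex.ofReal_re, neg_div,
    Finset.sum_div]
  simp only [Real.logb, mul_div_assoc]

lemma eq_eigenvectorUnitary_mul (hρ : ρ.IsHermitian) :
    ρ = (hρ.eigenvectorUnitary : Matrix ι ι ℂ) * diagonal (fun i => (hρ.eigenvalues i : ℂ)) *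
      (hρ.eigenvectorUnitary : Matrix ι ι ℂ)ᴴ := by
  simpa [cfc_id' ℝ ρ hρ.isSelfAdjoint] using cfc_eq_eigenvectorUnitary_mul hρ (fun x => x)

lemma exists_diagonal_sylvester_solution {p q : ι → ℝ} (hp : ∀ i, 0 ≤ p i) (hq : ∀ j, 0 ≤ q j)
    {t : ℝ} (ht : 0 < t) (O : Matrix ι ι ℂ) :
    ∃ Y, diagonal (fun j => (q j : ℂ)) * Y + (t : ℂ) • (Y * diagonal (fun i => (p i : ℂ))) =
        O * diagonal (fun i => (p i : ℂ)) ∧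
      (trace (Yᴴ * (O * diagonal (fun i => (p i : ℂ))))).re =
        resolventForm (fun k : ι × ι => Complex.normSq (O k.1 k.2)) (fun k => p k.2)
          (fun k => q k.1) t := by
  refine ⟨of fun j i => ((p i / (q j + t * p i) : ℝ) : ℂ) * O j i, ?_, ?_⟩
  · ext j i
    have hcancel : (q j + t * p i) * (p i / (q j + t * p i)) = p i :=
      mul_div_cancel_of_imp' fun h0 => by nlinarith [hp i, hq j, mul_nonneg ht.le (hp i)]
    have hcancel' : (q j + t * p i : ℂ) * ((p i / (q j + t * p i) : ℝ) : ℂ) = p i := by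
      exact_mod_cast hcancel
    simp only [Matrix.add_apply, Matrix.smul_apply, diagonal_mul, mul_diagonal, of_apply,
      smul_eq_mul]
    linear_combination O j i * hcancel'
  · simp only [resolventForm, trace, diag_apply, Matrix.mul_apply (M := _ᴴ), conjTranspose_apply,
      mul_diagonal, of_apply, Complex.re_sum, Fintype.sum_prod_type]
    rw [Finset.sum_comm]
    refine Finset.sum_congr rfl fun j _ => Finset.sum_congr rfl fun i _ => ?_
    simp [Complex.normSq_apply, -Complex.ofReal_div]
    ring

/-- In the eigenbases of `σ` and `ρ` the map `X ↦ σ X + t X ρ` is diagonal. -/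
lemma exists_sylvester_solution (hρ : ρ.PosSemidef) (hσ : σ.PosSemidef) {t : ℝ} (ht : 0 < t) :
    ∃ X, σ * X + (t : ℂ) • (X * ρ) = ρ ∧ (trace (Xᴴ * ρ)).re =
      resolventForm (eigenOverlap hρ.1 hσ.1) (fun k => hρ.1.eigenvalues k.2)
        (fun k => hσ.1.eigenvalues k.1) t := by
  have hρ_eq := eq_eigenvectorUnitary_mul hρ.1
  have hσ_eq := eq_eigenvectorUnitary_mul hσ.1
  obtain ⟨Y, hY, hYtr⟩ := exists_diagonal_sylvester_solution hρ.eigenvalues_nonneg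
    hσ.eigenvalues_nonneg ht
    ((hσ.1.eigenvectorUnitary : Matrix ι ι ℂ)ᴴ * hρ.1.eigenvectorUnitary)
  have hP : (hρ.1.eigenvectorUnitary : Matrix ι ι ℂ)ᴴ * hρ.1.eigenvectorUnitary = 1 := by
    simp [← star_eq_conjTranspose]
  have hV : (hσ.1.eigenvectorUnitary : Matrix ι ι ℂ)ᴴ * hσ.1.eigenvectorUnitary = 1 := by
    simp [← star_eq_conjTranspose]
  have hV' : (hσ.1.eigenvectorUnitary : Matrix ι ι ℂ) * (hσ.1.eigenvectorUnitary : Matrix ι ι ℂ)ᴴ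
      = 1 := by simp [← star_eq_conjTranspose]
  unfold eigenOverlap
  generalize hρ.1.eigenvalues = p at *
  generalize hσ.1.eigenvalues = q at *
  generalize (hρ.1.eigenvectorUnitary : Matrix ι ι ℂ) = P at *
  generalize (hσ.1.eigenvectorUnitary : Matrix ι ι ℂ) = V at *
  refine ⟨V * Y * Pᴴ, ?_, ?_⟩
  · calc σ * (V * Y * Pᴴ) + (t : ℂ) • (V * Y * Pᴴ * ρ)
        = V * (diagonal (fun j => (q j : ℂ)) * (Vᴴ * V) * Y +
            (t : ℂ) • (Y * (Pᴴ * P) * diagonal (fun i => (p i : ℂ)))) * Pᴴ := by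
          rw [hσ_eq, hρ_eq]
          simp only [Matrix.mul_add, Matrix.add_mul, Matrix.mul_smul, Matrix.smul_mul,
            Matrix.mul_assoc]
      _ = V * Vᴴ * (P * diagonal (fun i => (p i : ℂ)) * Pᴴ) := by
          rw [hV, hP, Matrix.mul_one, Matrix.mul_one, hY]
          simp only [Matrix.mul_assoc]
      _ = ρ := by rw [hV', Matrix.one_mul, ← hρ_eq]
  · rw [← hYtr, hρ_eq]
    simp only [conjTranspose_mul, conjTranspose_conjTranspose, Matrix.mul_assoc]
    rw [trace_mul_comm P]
    simp only [Matrix.mul_assoc, hP, Matrix.mul_one]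

end Spectral

section Restriction

variable {ι κ : Type*} [Fintype ι] [Fintype κ]

open scoped MatrixOrder in
lemma exists_eq_conjTranspose_mul_self {ρ : Matrix ι ι ℂ} (hρ : ρ.PosSemidef) :
    ∃ C : Matrix ι ι ℂ, ρ = Cᴴ * C :=
  CStarAlgebra.nonneg_iff_eq_star_mul_self.1 hρ.nonneg

lemma mul_eq_zero_iff_trace_eq_zero {ρ : Matrix ι ι ℂ} (hρ : ρ.PosSemidef)
    (X : Matrix ι κ ℂ) : ρ * X = 0 ↔ trace (X * Xᴴ * ρ) = 0 := by
  obtain ⟨C, rfl⟩ := exists_eq_conjTranspose_mul_self hρ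
  rw [conjTranspose_mul_self_mul_eq_zero, ← trace_mul_conjTranspose_self_eq_zero_iff,
    conjTranspose_mul, trace_mul_comm, ← Matrix.mul_assoc, trace_mul_comm]
  simp only [Matrix.mul_assoc]

lemma trace_mul_conjTranspose_mul_nonneg {ρ : Matrix ι ι ℂ} (hρ : ρ.PosSemidef)
    (M : Matrix ι κ ℂ) : 0 ≤ (trace (M * Mᴴ * ρ)).re := by
  rw [← trace_mul_cycle]
  exact (Complex.le_def.1 (hρ.conjTranspose_mul_mul_same M).trace_nonneg).1

/-- The quadratic form of the map `M ↦ σ M + t M ρ`. -/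
def sylvesterForm (ρ σ : Matrix ι ι ℂ) (t : ℝ) (M : Matrix ι ι ℂ) : ℝ :=
  (trace (M * Mᴴ * σ)).re + t * (trace (Mᴴ * M * ρ)).re

lemma sylvesterForm_nonneg {ρ σ : Matrix ι ι ℂ} (hρ : ρ.PosSemidef)
    (hσ : σ.PosSemidef) {t : ℝ} (ht : 0 ≤ t) (M : Matrix ι ι ℂ) : 0 ≤ sylvesterForm ρ σ t M := by
  refine add_nonneg (trace_mul_conjTranspose_mul_nonneg hσ M) (mul_nonneg ht ?_)
  simpa using trace_mul_conjTranspose_mul_nonneg hρ Mᴴ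

lemma re_trace_mul_comm_of_isHermitian {σ : Matrix ι ι ℂ} (hσ : σ.IsHermitian)
    (X Z : Matrix ι ι ℂ) : (trace (Z * X * σ)).re = (trace (Xᴴ * Zᴴ * σ)).re := by
  rw [← Complex.conj_re, ← Complex.star_def, ← trace_conjTranspose, conjTranspose_mul,
    conjTranspose_mul, hσ, trace_mul_comm]

/-- Completing the square. -/
lemma two_mul_re_trace_sub_sylvesterForm {ρ σ X : Matrix ι ι ℂ} (hρ : ρ.IsHermitian)
    (hσ : σ.IsHermitian) {t : ℝ} (hX : σ * X + (t : ℂ) • (X * ρ) = ρ) (Z : Matrix ι ι ℂ) :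
    2 * (trace (Zᴴ * ρ)).re - sylvesterForm ρ σ t Z =
      (trace (Xᴴ * ρ)).re - sylvesterForm ρ σ t (Z - X) := by
  have hpair (W : Matrix ι ι ℂ) :
      (trace (Wᴴ * ρ)).re = (trace (X * Wᴴ * σ)).re + t * (trace (Wᴴ * X * ρ)).re := by
    conv_lhs => rw [← hX]
    rw [Matrix.mul_add, Matrix.mul_smul, trace_add, trace_smul, ← Matrix.mul_assoc,
      ← Matrix.mul_assoc, trace_mul_cycle, smul_eq_mul, Complex.add_re, Complex.re_ofReal_mul]
  have hσ_symm := re_trace_mul_comm_of_isHermitian hσ Xᴴ Z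
  have hρ_symm := re_trace_mul_comm_of_isHermitian hρ Z Xᴴ
  rw [conjTranspose_conjTranspose] at hσ_symm hρ_symm
  have hZ := hpair Z
  have hXX := hpair X
  simp only [sylvesterForm, conjTranspose_sub, Matrix.mul_sub, Matrix.sub_mul, trace_sub,
    Complex.sub_re]
  linear_combination 2 * hZ - hXX - hσ_symm - t * hρ_symm

/-- `ρ'` represents the restriction of the functional `tr (· ρ)` along `Θ`. -/
def IsRestriction [DecidableEq ι] [DecidableEq κ] (Θ : Matrix κ κ ℂ →⋆ₐ[ℂ] Matrix ι ι ℂ)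
    (ρ : Matrix ι ι ℂ) (ρ' : Matrix κ κ ℂ) : Prop :=
  ∀ Y, trace (Θ Y * ρ) = trace (Y * ρ')

variable [DecidableEq ι] [DecidableEq κ] {Θ : Matrix κ κ ℂ →⋆ₐ[ℂ] Matrix ι ι ℂ}
  {ρ σ : Matrix ι ι ℂ} {ρ' σ' : Matrix κ κ ℂ}

lemma IsRestriction.trace_eq (h : IsRestriction Θ ρ ρ') : ρ.trace = ρ'.trace := by
  simpa using h 1

lemma IsRestriction.trace_conjTranspose (h : IsRestriction Θ ρ ρ') (Z : Matrix κ κ ℂ) :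
    trace ((Θ Z)ᴴ * ρ) = trace (Zᴴ * ρ') := by
  rw [← h, ← star_eq_conjTranspose, ← map_star, star_eq_conjTranspose]

lemma IsRestriction.trace_mul_conjTranspose (h : IsRestriction Θ ρ ρ') (Z : Matrix κ κ ℂ) :
    trace (Θ Z * (Θ Z)ᴴ * ρ) = trace (Z * Zᴴ * ρ') := by
  rw [← h, map_mul, ← star_eq_conjTranspose, ← star_eq_conjTranspose, map_star]

lemma IsRestriction.sylvesterForm_eq (hρ : IsRestriction Θ ρ ρ') (hσ : IsRestriction Θ σ σ')
    (t : ℝ) (Z : Matrix κ κ ℂ) : sylvesterForm ρ σ t (Θ Z) = sylvesterForm ρ' σ' t Z := by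
  have h := hρ.trace_mul_conjTranspose Zᴴ
  simp only [← star_eq_conjTranspose, map_star, star_star] at h
  rw [sylvesterForm, sylvesterForm, hσ.trace_mul_conjTranspose]
  simp only [← star_eq_conjTranspose, h]

/-- Both sides are values of the same concave quadratic functional, maximised over the matrices
`Θ Z` on the left and over all matrices on the right. -/
lemma IsRestriction.resolventForm_le (hρr : IsRestriction Θ ρ ρ') (hσr : IsRestriction Θ σ σ')
    (hρ : ρ.PosSemidef) (hσ : σ.PosSemidef) (hρ' : ρ'.PosSemidef) (hσ' : σ'.PosSemidef)
    {t : ℝ} (ht : 0 < t) :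
    resolventForm (eigenOverlap hρ'.1 hσ'.1) (fun k => hρ'.1.eigenvalues k.2)
        (fun k => hσ'.1.eigenvalues k.1) t ≤
      resolventForm (eigenOverlap hρ.1 hσ.1) (fun k => hρ.1.eigenvalues k.2)
        (fun k => hσ.1.eigenvalues k.1) t := by
  obtain ⟨X, hX, hXtr⟩ := exists_sylvester_solution hρ hσ ht
  obtain ⟨Z, hZ, hZtr⟩ := exists_sylvester_solution hρ' hσ' ht
  rw [← hXtr, ← hZtr]
  calc (trace (Zᴴ * ρ')).re = 2 * (trace (Zᴴ * ρ')).re - sylvesterForm ρ' σ' t Z := by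
        simpa [sylvesterForm] using
          (two_mul_re_trace_sub_sylvesterForm hρ'.1 hσ'.1 hZ Z).symm
    _ = 2 * (trace ((Θ Z)ᴴ * ρ)).re - sylvesterForm ρ σ t (Θ Z) := by
        rw [hρr.sylvesterForm_eq hσr, hρr.trace_conjTranspose]
    _ = (trace (Xᴴ * ρ)).re - sylvesterForm ρ σ t (Θ Z - X) :=
        two_mul_re_trace_sub_sylvesterForm hρ.1 hσ.1 hX (Θ Z)
    _ ≤ (trace (Xᴴ * ρ)).re := sub_le_self _ (sylvesterForm_nonneg hρ hσ ht.le _)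

/-- The kernel of `σ` is contained in that of `ρ`. -/
def KernelLE (σ ρ : Matrix ι ι ℂ) : Prop :=
  ∀ X : Matrix ι ι ℂ, σ * X = 0 → ρ * X = 0

lemma IsRestriction.kernelLE (hρr : IsRestriction Θ ρ ρ') (hσr : IsRestriction Θ σ σ')
    (hρ : ρ.PosSemidef) (hσ : σ.PosSemidef) (hρ' : ρ'.PosSemidef) (hσ' : σ'.PosSemidef)
    (h : KernelLE σ ρ) : KernelLE σ' ρ' := by
  intro X hX
  rw [mul_eq_zero_iff_trace_eq_zero hρ', ← hρr.trace_mul_conjTranspose,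
    ← mul_eq_zero_iff_trace_eq_zero hρ]
  refine h _ ?_
  rwa [mul_eq_zero_iff_trace_eq_zero hσ, hσr.trace_mul_conjTranspose,
    ← mul_eq_zero_iff_trace_eq_zero hσ']

lemma IsRestriction.kernelLE_map (h : IsRestriction Θ ρ ρ') (hρ : ρ.PosSemidef)
    (hρ' : ρ'.PosSemidef) : KernelLE (Θ ρ') ρ := by
  intro X hX
  let S := cfc (fun x : ℝ => x⁻¹) ρ'
  have hS : ρ' * (1 - S * ρ') = 0 := by
    have hcfc : ρ' * (S * ρ') = cfc (fun x : ℝ => x * (x⁻¹ * x)) ρ' := by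
      rw [cfc_mul _ _ ρ' (continuousOn_real_spectrum _ ρ') (continuousOn_real_spectrum _ ρ'),
        cfc_mul _ _ ρ' (continuousOn_real_spectrum _ ρ') (continuousOn_real_spectrum _ ρ'),
        cfc_id' ℝ ρ' hρ'.1.isSelfAdjoint]
    simp_rw [mul_sub, mul_one, hcfc, ← mul_assoc, mul_inv_mul_cancel]
    rw [cfc_id' ℝ ρ' hρ'.1.isSelfAdjoint, sub_self]
  have hΘS : ρ * Θ (1 - S * ρ') = 0 := by
    rwa [mul_eq_zero_iff_trace_eq_zero hρ, h.trace_mul_conjTranspose,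
      ← mul_eq_zero_iff_trace_eq_zero hρ']
  rw [map_sub, map_one, map_mul, Matrix.mul_sub, Matrix.mul_one, sub_eq_zero] at hΘS
  rw [hΘS, Matrix.mul_assoc, Matrix.mul_assoc, hX, Matrix.mul_zero, Matrix.mul_zero]

lemma KernelLE.eigenOverlap_mul_eigenvalues_eq_zero (h : KernelLE σ ρ) (hρ : ρ.PosSemidef)
    (hσ : σ.IsHermitian) {k : ι × ι} (hk : hσ.eigenvalues k.1 = 0) :
    eigenOverlap hρ.1 hσ k * hρ.1.eigenvalues k.2 = 0 := by
  let f : ℝ → ℝ := fun x => if x = 0 then 1 else 0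
  have hkill : ρ * cfc f σ = 0 := by
    refine h _ ?_
    have hf : (fun x => x * f x) = fun _ => 0 := by ext x; simp [f]
    rw [← cfc_const_zero ℝ σ, ← hf,
      cfc_mul _ _ σ (continuousOn_real_spectrum _ σ) (continuousOn_real_spectrum _ σ),
      cfc_id' ℝ σ hσ.isSelfAdjoint]
  have hsum := re_trace_mul_cfc hρ.1 hσ f
  rw [hkill, trace_zero, Complex.zero_re, eq_comm, Finset.sum_eq_zero_iff_of_nonneg] at hsum
  · simpa [f, hk] using hsum k (Finset.mem_univ k)
  · intro l _
    have hf : 0 ≤ f (hσ.eigenvalues l.1) := by simp only [f]; split_ifs <;> simp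
    exact mul_nonneg (mul_nonneg (Complex.normSq_nonneg _) (hρ.eigenvalues_nonneg _)) hf

theorem IsRestriction.relEntropy_le (hρr : IsRestriction Θ ρ ρ') (hσr : IsRestriction Θ σ σ')
    (hρ : ρ.PosSemidef) (hσ : σ.PosSemidef) (hρ' : ρ'.PosSemidef) (hσ' : σ'.PosSemidef)
    (h : KernelLE σ ρ) : relEntropy ρ' σ' ≤ relEntropy ρ σ := by
  rw [relEntropy_eq_sum hρ.1 hσ.1, relEntropy_eq_sum hρ'.1 hσ'.1]
  refine sum_mul_log_sub_log_le_of_resolventForm_le (fun _ => hρ.eigenvalues_nonneg _)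
    (fun _ => hσ.eigenvalues_nonneg _) (fun _ => hρ'.eigenvalues_nonneg _)
    (fun _ => hσ'.eigenvalues_nonneg _)
    (fun _ => h.eigenOverlap_mul_eigenvalues_eq_zero hρ hσ.1)
    (fun _ => (hρr.kernelLE hσr hρ hσ hρ' hσ' h).eigenOverlap_mul_eigenvalues_eq_zero hρ' hσ'.1)
    ?_ (fun t ht => hρr.resolventForm_le hσr hρ hσ hρ' hσ' ht)
  rw [← re_trace_eq_sum_eigenOverlap hρ.1 hσ.1, ← re_trace_eq_sum_eigenOverlap hρ'.1 hσ'.1,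
    hρr.trace_eq]

lemma IsRestriction.relEntropy_map (h : IsRestriction Θ ρ ρ') (hρ : ρ.IsHermitian)
    (hρ' : ρ'.IsHermitian) :
    relEntropy ρ (Θ ρ') = Real.log 2 * (vnEntropy ρ' - vnEntropy ρ) := by
  have hΘlog : Θ (cfc Real.log ρ') = cfc Real.log (Θ ρ') :=
    StarAlgHomClass.map_cfc Θ Real.log ρ' (continuousOn_real_spectrum _ ρ')
      (LinearMap.continuous_of_finiteDimensional Θ.toAlgHom.toLinearMap) hρ'.isSelfAdjoint
      (hρ'.isSelfAdjoint.map Θ)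
  have hlog2 : Real.log 2 ≠ 0 := (Real.log_pos one_lt_two).ne'
  have hcross : trace (ρ * cfc Real.log (Θ ρ')) = trace (ρ' * cfc Real.log ρ') := by
    rw [← hΘlog, trace_mul_comm, h, trace_mul_comm]
  rw [relEntropy, Matrix.mul_sub, trace_sub, Complex.sub_re, hcross,
    vnEntropy_eq_neg_re_trace hρ, vnEntropy_eq_neg_re_trace hρ']
  field_simp
  ring

end Restriction

section Marginal

variable {ι κ ν : Type*} [Fintype ν]

/-- The marginal of `ρ` on the first factor of a factorisation `e : κ × ν ≃ ι`. -/
def marginal (e : κ × ν ≃ ι) (ρ : Matrix ι ι ℂ) : Matrix κ κ ℂ :=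
  ptraceSnd (ρ.submatrix e e)

lemma posSemidef_ptraceSnd {ρ : Matrix (κ × ν) (κ × ν) ℂ} (hρ : ρ.PosSemidef) :
    (ptraceSnd ρ).PosSemidef := by
  have hsum : ptraceSnd ρ = ∑ b, ρ.submatrix (·, b) (·, b) := by
    ext a a'
    simp [ptraceSnd, Matrix.sum_apply]
  rw [hsum]
  exact posSemidef_sum _ fun b _ => hρ.submatrix _

lemma posSemidef_marginal (e : κ × ν ≃ ι) {ρ : Matrix ι ι ℂ} (hρ : ρ.PosSemidef) :
    (marginal e ρ).PosSemidef :=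
  posSemidef_ptraceSnd (hρ.submatrix e)

variable [Fintype ι] [Fintype κ] [DecidableEq ι] [DecidableEq κ] [DecidableEq ν]

/-- The ampliation `Y ↦ Y ⊗ 1` along a factorisation `e : κ × ν ≃ ι`. -/
def ampliation (e : κ × ν ≃ ι) : Matrix κ κ ℂ →⋆ₐ[ℂ] Matrix ι ι ℂ where
  toFun Y := reindexAlgEquiv ℂ ℂ e (Y ⊗ₖ 1)
  map_one' := by rw [one_kronecker_one, map_one]
  map_mul' Y Z := by rw [← map_mul, ← mul_kronecker_mul, Matrix.one_mul]
  map_zero' := by rw [zero_kronecker, map_zero]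
  map_add' Y Z := by rw [add_kronecker, map_add]
  commutes' c := by
    simp [Algebra.algebraMap_eq_smul_one, smul_kronecker]
  map_star' Y := by
    simp [star_eq_conjTranspose, conjTranspose_kronecker]

lemma ampliation_apply (e : κ × ν ≃ ι) (Y : Matrix κ κ ℂ) :
    ampliation e Y = (Y ⊗ₖ (1 : Matrix ν ν ℂ)).submatrix e.symm e.symm :=
  rfl

lemma isRestriction_marginal (e : κ × ν ≃ ι) (ρ : Matrix ι ι ℂ) :
    IsRestriction (ampliation e) ρ (marginal e ρ) := by
  intro Y
  simp only [ampliation_apply, marginal, ptraceSnd, trace, diag_apply, Matrix.mul_apply,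
    submatrix_apply, kroneckerMap_apply, of_apply, ← e.sum_comp, Equiv.symm_apply_apply,
    Fintype.sum_prod_type, one_apply, mul_ite, mul_one, mul_zero, ite_mul, zero_mul,
    Finset.sum_ite_eq, Finset.mem_univ, if_true, Finset.mul_sum]
  exact Finset.sum_congr rfl fun a _ => Finset.sum_comm

lemma posSemidef_ampliation (e : κ × ν ≃ ι) {Y : Matrix κ κ ℂ} (hY : Y.PosSemidef) :
    (ampliation e Y).PosSemidef :=
  (hY.kronecker PosSemidef.one).submatrix _

end Marginal

section ConditionalMutualInformation

variable {α β γ : Type*}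

/-- The factorisation of `ABE` into `AE` and `B`. -/
def splitRight (α β γ : Type*) : (α × γ) × β ≃ (α × β) × γ :=
  (Equiv.prodAssoc α γ β).trans
    (((Equiv.refl α).prodCongr (Equiv.prodComm γ β)).trans (Equiv.prodAssoc α β γ).symm)

/-- The factorisation of `ABE` into `BE` and `A`. -/
def splitLeft (α β γ : Type*) : (β × γ) × α ≃ (α × β) × γ :=
  (Equiv.prodComm _ _).trans (Equiv.prodAssoc α β γ).symm

variable [Fintype α] [Fintype β]

lemma marginal_prodComm_marginal_splitRight (ρ : Matrix ((α × β) × γ) ((α × β) × γ) ℂ) :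
    marginal (Equiv.prodComm γ α) (marginal (splitRight α β γ) ρ) =
      marginal (Equiv.prodComm γ (α × β)) ρ := by
  ext e e'
  simp [marginal, ptraceSnd, splitRight, Fintype.sum_prod_type]

lemma marginal_prodComm_marginal_splitLeft (ρ : Matrix ((α × β) × γ) ((α × β) × γ) ℂ) :
    marginal (Equiv.prodComm γ β) (marginal (splitLeft α β γ) ρ) =
      marginal (Equiv.prodComm γ (α × β)) ρ := by
  ext e e'
  simpa [marginal, ptraceSnd, splitLeft, Fintype.sum_prod_type] using Finset.sum_comm

variable [Fintype γ] [DecidableEq α] [DecidableEq β] [DecidableEq γ]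

lemma condMutInfo_eq_marginal (ρ : Matrix ((α × β) × γ) ((α × β) × γ) ℂ) :
    condMutInfo ρ = vnEntropy (marginal (splitRight α β γ) ρ) +
      vnEntropy (marginal (splitLeft α β γ) ρ) - vnEntropy ρ -
      vnEntropy (marginal (Equiv.prodComm γ (α × β)) ρ) := by
  have hE : marginal (Equiv.prodComm γ (α × β)) ρ =
      of fun e e' => ∑ a, ∑ b, ρ ((a, b), e) ((a, b), e') := by
    ext e e'
    simp [marginal, ptraceSnd, Fintype.sum_prod_type]
  rw [hE]
  rfl

lemma marginal_splitRight_ampliation_splitLeft (M : Matrix (β × γ) (β × γ) ℂ) :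
    marginal (splitRight α β γ) (ampliation (splitLeft α β γ) M) =
      ampliation (Equiv.prodComm γ α) (marginal (Equiv.prodComm γ β) M) := by
  ext x y
  simp [marginal, ptraceSnd, ampliation_apply, splitRight, splitLeft, one_apply]

/-- Strong subadditivity: comparing `ρ_ABE` with `1_A ⊗ ρ_BE` and their restrictions to `AE`,
the two relative entropies are differences of entropies. -/
theorem condMutInfo_nonneg {ρ : Matrix ((α × β) × γ) ((α × β) × γ) ℂ} (hρ : ρ.PosSemidef) :
    0 ≤ condMutInfo ρ := by
  have hAE := posSemidef_marginal (splitRight α β γ) hρ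
  have hBE := posSemidef_marginal (splitLeft α β γ) hρ
  have hE := posSemidef_marginal (Equiv.prodComm γ (α × β)) hρ
  have hrestr_BE := isRestriction_marginal (splitLeft α β γ) ρ
  have hrestr_E := isRestriction_marginal (Equiv.prodComm γ α) (marginal (splitRight α β γ) ρ)
  have hrestr := isRestriction_marginal (splitRight α β γ)
    (ampliation (splitLeft α β γ) (marginal (splitLeft α β γ) ρ))
  rw [marginal_prodComm_marginal_splitRight] at hrestr_E
  rw [marginal_splitRight_ampliation_splitLeft, marginal_prodComm_marginal_splitLeft] at hrestr
  have hle := (isRestriction_marginal (splitRight α β γ) ρ).relEntropy_le hrestr hρ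
    (posSemidef_ampliation _ hBE) hAE (posSemidef_ampliation _ hE) (hrestr_BE.kernelLE_map hρ hBE)
  rw [hrestr_BE.relEntropy_map hρ.1 hBE.1, hrestr_E.relEntropy_map hAE.1 hE.1,
    mul_le_mul_iff_right₀ (Real.log_pos one_lt_two)] at hle
  rw [condMutInfo_eq_marginal]
  linarith

end ConditionalMutualInformation

section Entropy

/-- The entropy, in nats, of the real parts of the roots of a polynomial. -/
def rootEntropy (P : Polynomial ℂ) : ℝ :=
  (P.roots.map fun z => Real.negMulLog z.re).sum

lemma rootEntropy_mul {P Q : Polynomial ℂ} (hP : P ≠ 0) (hQ : Q ≠ 0) :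
    rootEntropy (P * Q) = rootEntropy P + rootEntropy Q := by
  simp [rootEntropy, Polynomial.roots_mul (mul_ne_zero hP hQ)]

variable {ι κ : Type*}

lemma isHermitian_blockDiagonal [DecidableEq κ] {M : κ → Matrix ι ι ℂ}
    (hM : ∀ k, (M k).IsHermitian) : (blockDiagonal M).IsHermitian := by
  rw [IsHermitian, blockDiagonal_conjTranspose]
  exact congrArg blockDiagonal (funext hM)

variable [Fintype κ]

lemma rootEntropy_prod {P : κ → Polynomial ℂ} (hP : ∀ k, P k ≠ 0) :
    rootEntropy (∏ k, P k) = ∑ k, rootEntropy (P k) := by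
  simp [rootEntropy, Polynomial.roots_prod _ _ (Finset.prod_ne_zero_iff.2 fun k _ => hP k),
    Multiset.map_bind, Multiset.sum_bind]

variable [Fintype ι] [DecidableEq ι] [DecidableEq κ]

lemma vnEntropy_eq_rootEntropy {M : Matrix ι ι ℂ} (hM : M.IsHermitian) :
    vnEntropy M = rootEntropy M.charpoly / Real.log 2 := by
  rw [vnEntropy, dif_pos hM, rootEntropy, hM.roots_charpoly_eq_eigenvalues, Multiset.map_map,
    ← Finset.sum_eq_multiset_sum, Finset.sum_div, ← Finset.sum_neg_distrib]
  refine Finset.sum_congr rfl fun i _ => ?_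
  simp [Real.negMulLog, Real.logb, mul_div_assoc, neg_div]

lemma vnEntropy_submatrix {M : Matrix κ κ ℂ} (hM : M.IsHermitian) (e : ι ≃ κ) :
    vnEntropy (M.submatrix e e) = vnEntropy M := by
  rw [vnEntropy_eq_rootEntropy hM, vnEntropy_eq_rootEntropy (hM.submatrix e)]
  congr 2
  simpa using charpoly_reindex e.symm M

lemma vnEntropy_isometry_conj {W : Matrix ι κ ℂ} (hW : Wᴴ * W = 1) {M : Matrix κ κ ℂ}
    (hM : M.IsHermitian) : vnEntropy (W * M * Wᴴ) = vnEntropy M := by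
  have hchar := congrArg rootEntropy (charpoly_mul_comm' W (M * Wᴴ))
  rw [Matrix.mul_assoc M, hW, Matrix.mul_one, ← Matrix.mul_assoc,
    rootEntropy_mul (pow_ne_zero _ Polynomial.X_ne_zero) (charpoly_monic _).ne_zero,
    rootEntropy_mul (pow_ne_zero _ Polynomial.X_ne_zero) (charpoly_monic _).ne_zero] at hchar
  rw [vnEntropy_eq_rootEntropy hM,
    vnEntropy_eq_rootEntropy (isHermitian_mul_mul_conjTranspose W hM)]
  congr 1
  simpa [rootEntropy, Multiset.map_nsmul, Multiset.sum_nsmul] using hchar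

lemma charpoly_blockDiagonal (M : κ → Matrix ι ι ℂ) :
    (blockDiagonal M).charpoly = ∏ k, (M k).charpoly := by
  have hchar : charmatrix (blockDiagonal M) = blockDiagonal fun k => charmatrix (M k) := by
    ext ⟨i, k⟩ ⟨j, l⟩
    by_cases hkl : k = l <;> by_cases hij : i = j <;> simp [blockDiagonal_apply, hkl, hij]
  simp only [charpoly, hchar, det_blockDiagonal]

lemma vnEntropy_blockDiagonal {M : κ → Matrix ι ι ℂ} (hM : ∀ k, (M k).IsHermitian) :
    vnEntropy (blockDiagonal M) = ∑ k, vnEntropy (M k) := by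
  simp only [vnEntropy_eq_rootEntropy (isHermitian_blockDiagonal hM),
    vnEntropy_eq_rootEntropy (hM _), charpoly_blockDiagonal,
    rootEntropy_prod fun k => (charpoly_monic (M k)).ne_zero, Finset.sum_div]

lemma cfc_mul_log_smul {M : Matrix ι ι ℂ} (hM : M.IsHermitian) (c : ℝ) :
    cfc (fun x => x * Real.log x) (c • M) =
      c • cfc (fun x => x * Real.log x) M + (c * Real.log c) • M := by
  have hlog : (fun x : ℝ => c • x * Real.log (c • x)) =
      fun x => c • (x * Real.log x) + (c * Real.log c) • x := by
    ext x
    have := Real.negMulLog_mul c x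
    simp only [Real.negMulLog] at this
    simp only [smul_eq_mul]
    linarith
  rw [← cfc_comp_smul c _ M ((M.finite_real_spectrum.image _).continuousOn _) hM.isSelfAdjoint,
    hlog, cfc_add _ _ _ (continuousOn_real_spectrum _ M) (continuousOn_real_spectrum _ M),
    cfc_smul _ _ _ (continuousOn_real_spectrum _ M),
    cfc_smul _ _ _ (continuousOn_real_spectrum _ M), cfc_id' ℝ M hM.isSelfAdjoint]

lemma vnEntropy_smul {M : Matrix ι ι ℂ} (hM : M.IsHermitian) (c : ℝ) :
    vnEntropy (c • M) = c * vnEntropy M - c * Real.logb 2 c * M.trace.re := by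
  have hcM : (c • M).IsHermitian := hM.smul (IsSelfAdjoint.all c)
  rw [vnEntropy_eq_neg_re_trace hM, vnEntropy_eq_neg_re_trace hcM, mul_cfc_log hM,
    mul_cfc_log hcM, cfc_mul_log_smul hM]
  simp only [trace_add, trace_smul, Complex.add_re, Complex.real_smul, Complex.re_ofReal_mul,
    Real.logb]
  ring

lemma vnEntropy_blockDiagonal_uniform [Nonempty κ] {M : κ → Matrix ι ι ℂ}
    (hM : ∀ k, (M k).IsHermitian) (htr : ∀ k, (M k).trace = 1) :
    vnEntropy (blockDiagonal fun k => (Fintype.card κ : ℝ)⁻¹ • M k) =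
      (Fintype.card κ : ℝ)⁻¹ * ∑ k, vnEntropy (M k) + Real.logb 2 (Fintype.card κ) := by
  have hcard : (Fintype.card κ : ℝ) ≠ 0 := by simp
  rw [vnEntropy_blockDiagonal fun k => (hM k).smul (IsSelfAdjoint.all _)]
  simp only [vnEntropy_smul (hM _), htr, Finset.sum_sub_distrib, ← Finset.mul_sum,
    Complex.one_re, Finset.sum_const, Finset.card_univ, nsmul_eq_mul, Real.logb_inv]
  field_simp
  ring

end Entropy

section LocalConjugation

variable {ι κ ν : Type*} [Fintype ν] [DecidableEq ν]

lemma conjTranspose_mul_self_kronecker_one [Fintype ι] [DecidableEq κ] {W : Matrix ι κ ℂ}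
    (hW : Wᴴ * W = 1) : (W ⊗ₖ (1 : Matrix ν ν ℂ))ᴴ * (W ⊗ₖ (1 : Matrix ν ν ℂ)) = 1 := by
  rw [conjTranspose_kronecker, ← mul_kronecker_mul, hW, conjTranspose_one, Matrix.one_mul,
    one_kronecker_one]

variable [Fintype κ]

lemma mul_mul_conjTranspose_apply (V W : Matrix ι κ ℂ) (σ : Matrix κ κ ℂ) (x y : ι) :
    (V * σ * Wᴴ) x y = V x ᵥ* σ ⬝ᵥ star (W y) :=
  rfl

/-- The conjugation `τ ↦ (W ⊗ 1) τ (W ⊗ 1)ᴴ` by an operator `W` on the first tensor factor. -/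
def localConj (W : Matrix ι κ ℂ) (τ : Matrix (κ × ν) (κ × ν) ℂ) : Matrix (ι × ν) (ι × ν) ℂ :=
  (W ⊗ₖ (1 : Matrix ν ν ℂ)) * τ * (W ⊗ₖ (1 : Matrix ν ν ℂ))ᴴ

lemma posSemidef_localConj [Finite ι] (W : Matrix ι κ ℂ) {τ : Matrix (κ × ν) (κ × ν) ℂ}
    (hτ : τ.PosSemidef) : (localConj W τ).PosSemidef :=
  hτ.mul_mul_conjTranspose_same _

lemma trace_kronecker_one_mul (Y : Matrix κ κ ℂ) (ρ : Matrix (κ × ν) (κ × ν) ℂ) :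
    trace (Y ⊗ₖ (1 : Matrix ν ν ℂ) * ρ) = trace (Y * ptraceSnd ρ) :=
  isRestriction_marginal (Equiv.refl (κ × ν)) ρ Y

lemma ampliation_prodComm [DecidableEq κ] (Y : Matrix ν ν ℂ) :
    ampliation (Equiv.prodComm ν κ) Y = (1 : Matrix κ κ ℂ) ⊗ₖ Y := by
  ext ⟨a, e⟩ ⟨a', e'⟩
  simp [ampliation_apply, mul_comm]

variable [Fintype ι] [DecidableEq κ]

lemma trace_isometry_conj {W : Matrix ι κ ℂ} (hW : Wᴴ * W = 1) (σ : Matrix κ κ ℂ) :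
    (W * σ * Wᴴ).trace = σ.trace := by
  rw [trace_mul_cycle, hW, Matrix.one_mul]

/-- The projection `(1 - W Wᴴ) ⊗ 1` has expectation zero in `ρ`, hence annihilates `ρ`. -/
lemma exists_localConj_eq_of_ptraceSnd_eq {W : Matrix ι κ ℂ} (hW : Wᴴ * W = 1)
    {σ : Matrix κ κ ℂ} {ρ : Matrix (ι × ν) (ι × ν) ℂ} (hρ : ρ.PosSemidef)
    (h : ptraceSnd ρ = W * σ * Wᴴ) :
    ∃ τ : Matrix (κ × ν) (κ × ν) ℂ, τ.PosSemidef ∧ localConj W τ = ρ := by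
  set Q := W ⊗ₖ (1 : Matrix ν ν ℂ) with hQ
  have hcompl_mul : (1 - W * Wᴴ)ᴴ * W = 0 := by
    rw [conjTranspose_sub, conjTranspose_mul, conjTranspose_conjTranspose, conjTranspose_one,
      Matrix.sub_mul, Matrix.mul_assoc, hW, Matrix.one_mul, Matrix.mul_one, sub_self]
  have hcompl : (1 - W * Wᴴ) ⊗ₖ (1 : Matrix ν ν ℂ) = 1 - Q * Qᴴ := by
    rw [hQ, conjTranspose_kronecker, ← mul_kronecker_mul, conjTranspose_one, Matrix.one_mul,
      eq_sub_iff_add_eq, ← add_kronecker, sub_add_cancel, one_kronecker_one]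
  have hannihilate : ρ * ((1 - W * Wᴴ) ⊗ₖ (1 : Matrix ν ν ℂ)) = 0 := by
    rw [mul_eq_zero_iff_trace_eq_zero hρ, conjTranspose_kronecker, ← mul_kronecker_mul,
      conjTranspose_one, Matrix.one_mul, trace_kronecker_one_mul, h, Matrix.mul_assoc W,
      Matrix.mul_assoc (1 - _), ← Matrix.mul_assoc _ W, hcompl_mul, Matrix.zero_mul,
      Matrix.mul_zero, trace_zero]
  have hright : ρ * (Q * Qᴴ) = ρ := by
    rwa [hcompl, Matrix.mul_sub, Matrix.mul_one, sub_eq_zero, eq_comm] at hannihilate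
  have hleft : Q * Qᴴ * ρ = ρ := by
    have := congrArg conjTranspose hright
    rwa [conjTranspose_mul, conjTranspose_mul, conjTranspose_conjTranspose, hρ.1] at this
  refine ⟨Qᴴ * ρ * Q, hρ.conjTranspose_mul_mul_same Q, ?_⟩
  calc Q * (Qᴴ * ρ * Q) * Qᴴ = Q * Qᴴ * (ρ * (Q * Qᴴ)) := by simp only [Matrix.mul_assoc]
    _ = ρ := by rw [hright, hleft]

variable {W : Matrix ι κ ℂ} (hW : Wᴴ * W = 1)
include hW

lemma trace_localConj (τ : Matrix (κ × ν) (κ × ν) ℂ) : (localConj W τ).trace = τ.trace :=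
  trace_isometry_conj (conjTranspose_mul_self_kronecker_one hW) τ

lemma vnEntropy_localConj [DecidableEq ι] {τ : Matrix (κ × ν) (κ × ν) ℂ} (hτ : τ.IsHermitian) :
    vnEntropy (localConj W τ) = vnEntropy τ :=
  vnEntropy_isometry_conj (conjTranspose_mul_self_kronecker_one hW) hτ

lemma marginal_prodComm_localConj (τ : Matrix (κ × ν) (κ × ν) ℂ) :
    marginal (Equiv.prodComm ν ι) (localConj W τ) = marginal (Equiv.prodComm ν κ) τ := by
  refine ext_iff_trace_mul_left.2 fun Y => ?_
  rw [← isRestriction_marginal, ← isRestriction_marginal, ampliation_prodComm,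
    ampliation_prodComm, localConj, ← Matrix.mul_assoc, trace_mul_comm, ← Matrix.mul_assoc,
    ← Matrix.mul_assoc, conjTranspose_kronecker, ← mul_kronecker_mul, ← mul_kronecker_mul,
    Matrix.mul_one, hW, conjTranspose_one, Matrix.one_mul, Matrix.mul_one]

end LocalConjugation

section KeyIsometry

variable {ι α β κ ν : Type*} [Fintype ι]

lemma inv_sqrt_card_mul_self :
    ((Real.sqrt (Fintype.card ι))⁻¹ : ℂ) * ((Real.sqrt (Fintype.card ι))⁻¹ : ℂ) =
      (Fintype.card ι : ℂ)⁻¹ := by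
  rw [← mul_inv, ← Complex.ofReal_mul, Real.mul_self_sqrt (Nat.cast_nonneg _),
    Complex.ofReal_natCast]

variable [DecidableEq ι]

/-- The operator `|ι|^{-1/2} ∑ i, |i⟩_A |i⟩_B ⊗ V i`, which sends the shield state to the key
state when the `V i` are unitary. -/
def keyIsometry (V : ι → Matrix (α × β) κ ℂ) : Matrix ((ι × α) × (ι × β)) κ ℂ :=
  of fun x => if x.1.1 = x.2.1 then
    ((Real.sqrt (Fintype.card ι))⁻¹ : ℂ) • V x.1.1 (x.1.2, x.2.2) else 0

lemma keyIsometry_row (V : ι → Matrix (α × β) κ ℂ) (x : (ι × α) × (ι × β)) :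
    keyIsometry V x = if x.1.1 = x.2.1 then
      ((Real.sqrt (Fintype.card ι))⁻¹ : ℂ) • V x.1.1 (x.1.2, x.2.2) else 0 :=
  rfl

lemma keyIsometry_kronecker_one_row [DecidableEq ν] (V : ι → Matrix (α × β) κ ℂ)
    (x : (ι × α) × (ι × β)) (e : ν) :
    (keyIsometry V ⊗ₖ (1 : Matrix ν ν ℂ)) (x, e) = if x.1.1 = x.2.1 then
      ((Real.sqrt (Fintype.card ι))⁻¹ : ℂ) •
        (V x.1.1 ⊗ₖ (1 : Matrix ν ν ℂ)) ((x.1.2, x.2.2), e) else 0 := by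
  ext y
  by_cases hx : x.1.1 = x.2.1 <;> simp [keyIsometry_row, hx, mul_assoc]

lemma conjTranspose_mul_self_keyIsometry [Fintype α] [Fintype β] [DecidableEq κ]
    [Nonempty ι] {V : ι → Matrix (α × β) κ ℂ} (hV : ∀ i, (V i)ᴴ * V i = 1) :
    (keyIsometry V)ᴴ * keyIsometry V = 1 := by
  have hsum : (keyIsometry V)ᴴ * keyIsometry V =
      ∑ i, (Fintype.card ι : ℂ)⁻¹ • ((V i)ᴴ * V i) := by
    ext y z
    simp only [Matrix.mul_apply, conjTranspose_apply, keyIsometry_row, Fintype.sum_prod_type,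
      Matrix.sum_apply, Matrix.smul_apply, smul_eq_mul, Finset.mul_sum, ← inv_sqrt_card_mul_self]
    refine Finset.sum_congr rfl fun i _ => Finset.sum_congr rfl fun a _ => ?_
    rw [Finset.sum_comm]
    refine Finset.sum_congr rfl fun b _ => ?_
    rw [Finset.sum_eq_single i]
    · simp only [if_true, Pi.smul_apply, smul_eq_mul, star_mul', star_inv₀, Complex.star_def,
        Complex.conj_ofReal]
      ring
    · intro j _ hj
      simp [hj.symm]
    · simp
  simp [hsum, hV, ← Nat.cast_smul_eq_nsmul ℂ]

variable [Fintype κ]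

lemma keyIsometry_conj_apply (V : ι → Matrix (α × β) κ ℂ) (σ : Matrix κ κ ℂ)
    (x y : (ι × α) × (ι × β)) :
    (keyIsometry V * σ * (keyIsometry V)ᴴ) x y =
      if x.1.1 = x.2.1 ∧ y.1.1 = y.2.1 then (Fintype.card ι : ℂ)⁻¹ *
        (V x.1.1 * σ * (V y.1.1)ᴴ) (x.1.2, x.2.2) (y.1.2, y.2.2) else 0 := by
  rw [mul_mul_conjTranspose_apply, ← inv_sqrt_card_mul_self, keyIsometry_row, keyIsometry_row]
  by_cases hx : x.1.1 = x.2.1 <;> by_cases hy : y.1.1 = y.2.1 <;>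
    simp [mul_mul_conjTranspose_apply, smul_vecMul, mul_assoc, hx, hy]

lemma localConj_keyIsometry_apply [Fintype ν] [DecidableEq ν] (V : ι → Matrix (α × β) κ ℂ)
    (τ : Matrix (κ × ν) (κ × ν) ℂ) (x y : ((ι × α) × (ι × β)) × ν) :
    localConj (keyIsometry V) τ x y =
      if x.1.1.1 = x.1.2.1 ∧ y.1.1.1 = y.1.2.1 then (Fintype.card ι : ℂ)⁻¹ *
        ((V x.1.1.1 ⊗ₖ (1 : Matrix ν ν ℂ)) * τ * (V y.1.1.1 ⊗ₖ (1 : Matrix ν ν ℂ))ᴴ)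
          ((x.1.1.2, x.1.2.2), x.2) ((y.1.1.2, y.1.2.2), y.2) else 0 := by
  rw [localConj, mul_mul_conjTranspose_apply, ← inv_sqrt_card_mul_self,
    keyIsometry_kronecker_one_row, keyIsometry_kronecker_one_row]
  by_cases hx : x.1.1.1 = x.1.2.1 <;> by_cases hy : y.1.1.1 = y.1.2.1 <;>
    simp [mul_mul_conjTranspose_apply, smul_vecMul, mul_assoc, hx, hy]

variable [Fintype ν] [DecidableEq ν]

lemma marginal_splitRight_localConj_keyIsometry [Fintype β] (V : ι → Matrix (α × β) κ ℂ)
    (τ : Matrix (κ × ν) (κ × ν) ℂ) :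
    marginal (splitRight (ι × α) (ι × β) ν) (localConj (keyIsometry V) τ) =
      (blockDiagonal fun i => (Fintype.card ι : ℝ)⁻¹ •
        marginal (splitRight α β ν) (localConj (V i) τ)).submatrix
          (splitLeft ι α ν).symm (splitLeft ι α ν).symm := by
  ext ⟨⟨i, a⟩, e⟩ ⟨⟨i', a'⟩, e'⟩
  obtain rfl | hi := eq_or_ne i i'
  · simp [marginal, ptraceSnd, splitRight, splitLeft, localConj_keyIsometry_apply,
      Fintype.sum_prod_type, blockDiagonal_apply, Finset.mul_sum, ← localConj.eq_def]
  · simp [marginal, ptraceSnd, splitRight, splitLeft, localConj_keyIsometry_apply,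
      Fintype.sum_prod_type, blockDiagonal_apply, hi, hi.symm, ite_and]

lemma marginal_splitLeft_localConj_keyIsometry [Fintype α] (V : ι → Matrix (α × β) κ ℂ)
    (τ : Matrix (κ × ν) (κ × ν) ℂ) :
    marginal (splitLeft (ι × α) (ι × β) ν) (localConj (keyIsometry V) τ) =
      (blockDiagonal fun i => (Fintype.card ι : ℝ)⁻¹ •
        marginal (splitLeft α β ν) (localConj (V i) τ)).submatrix
          (splitLeft ι β ν).symm (splitLeft ι β ν).symm := by
  ext ⟨⟨i, b⟩, e⟩ ⟨⟨i', b'⟩, e'⟩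
  obtain rfl | hi := eq_or_ne i i'
  · simp [marginal, ptraceSnd, splitLeft, localConj_keyIsometry_apply,
      Fintype.sum_prod_type, blockDiagonal_apply, Finset.mul_sum, ← localConj.eq_def]
  · simp [marginal, ptraceSnd, splitLeft, localConj_keyIsometry_apply,
      Fintype.sum_prod_type, blockDiagonal_apply, hi, ite_and]

variable [Fintype α] [Fintype β] [DecidableEq κ] [Nonempty ι]
  {V : ι → Matrix (α × β) κ ℂ} (hV : ∀ i, (V i)ᴴ * V i = 1)
  {τ : Matrix (κ × ν) (κ × ν) ℂ} (hτ : τ.PosSemidef) (htr : τ.trace = 1)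
include hV hτ htr

lemma vnEntropy_marginal_splitRight_localConj_keyIsometry [DecidableEq α] :
    vnEntropy (marginal (splitRight (ι × α) (ι × β) ν) (localConj (keyIsometry V) τ)) =
      (Fintype.card ι : ℝ)⁻¹ * ∑ i, vnEntropy (marginal (splitRight α β ν) (localConj (V i) τ)) +
        Real.logb 2 (Fintype.card ι) := by
  have hherm i := (posSemidef_marginal (splitRight α β ν) (posSemidef_localConj (V i) hτ)).1
  rw [marginal_splitRight_localConj_keyIsometry, vnEntropy_submatrix,
    vnEntropy_blockDiagonal_uniform hherm]
  · intro i
    rw [← (isRestriction_marginal _ _).trace_eq, trace_localConj (hV i), htr]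
  · exact isHermitian_blockDiagonal fun i => (hherm i).smul (IsSelfAdjoint.all _)

lemma vnEntropy_marginal_splitLeft_localConj_keyIsometry [DecidableEq β] :
    vnEntropy (marginal (splitLeft (ι × α) (ι × β) ν) (localConj (keyIsometry V) τ)) =
      (Fintype.card ι : ℝ)⁻¹ * ∑ i, vnEntropy (marginal (splitLeft α β ν) (localConj (V i) τ)) +
        Real.logb 2 (Fintype.card ι) := by
  have hherm i := (posSemidef_marginal (splitLeft α β ν) (posSemidef_localConj (V i) hτ)).1
  rw [marginal_splitLeft_localConj_keyIsometry, vnEntropy_submatrix,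
    vnEntropy_blockDiagonal_uniform hherm]
  · intro i
    rw [← (isRestriction_marginal _ _).trace_eq, trace_localConj (hV i), htr]
  · exact isHermitian_blockDiagonal fun i => (hherm i).smul (IsSelfAdjoint.all _)

variable [DecidableEq α] [DecidableEq β]

lemma condMutInfo_localConj_keyIsometry :
    condMutInfo (localConj (keyIsometry V) τ) =
      2 * Real.logb 2 (Fintype.card ι) +
        (Fintype.card ι : ℝ)⁻¹ * ∑ i, condMutInfo (localConj (V i) τ) := by
  have hW := conjTranspose_mul_self_keyIsometry hV
  have hcard : (Fintype.card ι : ℝ) ≠ 0 := by simp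
  simp only [condMutInfo_eq_marginal, vnEntropy_marginal_splitRight_localConj_keyIsometry hV hτ htr,
    vnEntropy_marginal_splitLeft_localConj_keyIsometry hV hτ htr, vnEntropy_localConj hW hτ.1,
    vnEntropy_localConj (hV _) hτ.1, marginal_prodComm_localConj hW,
    marginal_prodComm_localConj (hV _), Finset.sum_sub_distrib, Finset.sum_add_distrib,
    Finset.sum_const, Finset.card_univ, nsmul_eq_mul]
  field_simp
  ring

lemma two_mul_logb_card_le_condMutInfo :
    2 * Real.logb 2 (Fintype.card ι) ≤ condMutInfo (localConj (keyIsometry V) τ) := by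
  rw [condMutInfo_localConj_keyIsometry hV hτ htr]
  have hnonneg : 0 ≤ ∑ i, condMutInfo (localConj (V i) τ) :=
    Finset.sum_nonneg fun i _ => condMutInfo_nonneg (posSemidef_localConj (V i) hτ)
  exact le_add_of_nonneg_right (mul_nonneg (by positivity) hnonneg)

end KeyIsometry

section SquashedEntanglement

lemma exists_extension {ι : Type*} [Fintype ι] {ρ : Matrix ι ι ℂ} (hρ : ρ.PosSemidef) :
    ∃ (n : ℕ) (τ : Matrix (ι × Fin n) (ι × Fin n) ℂ),
      τ.PosSemidef ∧ τ.trace = ρ.trace ∧ ptraceSnd τ = ρ := by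
  refine ⟨1, ρ.submatrix Prod.fst Prod.fst, hρ.submatrix _, ?_, ?_⟩
  · simp [trace, Fintype.sum_prod_type]
  · ext x y
    simp [ptraceSnd]

theorem Esq_key_state_ge_general {ι α β κ : Type*} [Fintype ι] [DecidableEq ι] [Nonempty ι]
    [Fintype α] [DecidableEq α] [Fintype β] [DecidableEq β] [Fintype κ] [DecidableEq κ]
    {V : ι → Matrix (α × β) κ ℂ} (hV : ∀ i, (V i)ᴴ * V i = 1) {σ : Matrix κ κ ℂ}
    (hσ : σ.PosSemidef) (htr : σ.trace = 1) :
    Real.logb 2 (Fintype.card ι) ≤ Esq (keyIsometry V * σ * (keyIsometry V)ᴴ) := by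
  have hW := conjTranspose_mul_self_keyIsometry hV
  refine le_csInf ?_ ?_
  · obtain ⟨n, ρ, hρ, hρtr, hpt⟩ :=
      exists_extension (hσ.mul_mul_conjTranspose_same (keyIsometry V))
    exact ⟨_, n, ρ, hρ, by rw [hρtr, trace_isometry_conj hW, htr], hpt, rfl⟩
  · rintro _ ⟨n, ρ, hρ, hρtr, hpt, rfl⟩
    obtain ⟨τ, hτ, rfl⟩ := exists_localConj_eq_of_ptraceSnd_eq hW hρ hpt
    rw [trace_localConj hW] at hρtr
    linarith [two_mul_logb_card_le_condMutInfo hV hτ hρtr]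

end SquashedEntanglement

section KeyState

variable {α β : Type*} [Fintype α] [Fintype β] (m : ℕ)

lemma phiSigma_submatrix [DecidableEq α] [DecidableEq β] (σ : Matrix (α × β) (α × β) ℂ) :
    (phiSigma m σ).submatrix (Equiv.prodProdProdComm (Fin (2 ^ m)) α (Fin (2 ^ m)) β)
        (Equiv.prodProdProdComm (Fin (2 ^ m)) α (Fin (2 ^ m)) β) =
      keyIsometry (fun _ : Fin (2 ^ m) => (1 : Matrix (α × β) (α × β) ℂ)) * σ *
        (keyIsometry fun _ : Fin (2 ^ m) => (1 : Matrix (α × β) (α × β) ℂ))ᴴ := by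
  ext x y
  simp [keyIsometry_conj_apply, phiSigma]

lemma keyU_submatrix_mul_keyIsometry_one [DecidableEq α] [DecidableEq β]
    (U : Fin (2 ^ m) → Matrix (α × β) (α × β) ℂ) :
    (keyU m U).submatrix (Equiv.prodProdProdComm (Fin (2 ^ m)) α (Fin (2 ^ m)) β)
        (Equiv.prodProdProdComm (Fin (2 ^ m)) α (Fin (2 ^ m)) β) *
        keyIsometry (fun _ : Fin (2 ^ m) => (1 : Matrix (α × β) (α × β) ℂ)) =
      keyIsometry U := by
  ext ⟨⟨i, a⟩, ⟨j, b⟩⟩ ⟨a', b'⟩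
  obtain rfl | hij := eq_or_ne i j
  · simp [Matrix.mul_apply, keyU, keyIsometry_row, Fintype.sum_prod_type, ite_and, ite_apply,
      one_apply, mul_comm]
  · simp [Matrix.mul_apply, keyU, keyIsometry_row, hij]

lemma keyState_eq (σ : Matrix (α × β) (α × β) ℂ) (U : Fin (2 ^ m) → Matrix (α × β) (α × β) ℂ) :
    (keyU m U * phiSigma m σ * (keyU m U)ᴴ).submatrix
        (Equiv.prodProdProdComm (Fin (2 ^ m)) α (Fin (2 ^ m)) β)
        (Equiv.prodProdProdComm (Fin (2 ^ m)) α (Fin (2 ^ m)) β) =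
      keyIsometry U * σ * (keyIsometry U)ᴴ := by
  rw [← keyU_submatrix_mul_keyIsometry_one m U, conjTranspose_mul, ← submatrix_mul_equiv _ _ _
    (Equiv.prodProdProdComm (Fin (2 ^ m)) α (Fin (2 ^ m)) β),
    ← submatrix_mul_equiv _ _ _ (Equiv.prodProdProdComm (Fin (2 ^ m)) α (Fin (2 ^ m)) β),
    phiSigma_submatrix, ← conjTranspose_submatrix]
  simp only [Matrix.mul_assoc]

end KeyState

/-- the key state `γ = U (|Φ⟩⟨Φ| ⊗ σ) U†`, viewed as bipartite with
respect to `AA' : BB'`, has squashed entanglement at least `m`. -/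
theorem Esq_key_state_ge (m : ℕ) (hm : 1 ≤ m) (α' β' : Type*)
    [Fintype α'] [DecidableEq α'] [Fintype β'] [DecidableEq β']
    (σ : Matrix (α' × β') (α' × β') ℂ) (hσ : σ.PosSemidef) (hσtr : σ.trace = 1)
    (U : Fin (2 ^ m) → Matrix (α' × β') (α' × β') ℂ)
    (hU : ∀ i, U i ∈ Matrix.unitaryGroup (α' × β') ℂ) :
    (m : ℝ) ≤ Esq ((keyU m U * phiSigma m σ * (keyU m U).conjTranspose).submatrix
      (Equiv.prodProdProdComm (Fin (2 ^ m)) α' (Fin (2 ^ m)) β')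
      (Equiv.prodProdProdComm (Fin (2 ^ m)) α' (Fin (2 ^ m)) β')) := by
  have hlog : Real.logb 2 (Fintype.card (Fin (2 ^ m))) = m := by
    simp [Real.logb_pow]
  rw [keyState_eq, ← hlog]
  exact Esq_key_state_ge_general (fun i => mem_unitaryGroup_iff'.1 (hU i)) hσ hσtr

end
end
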